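/- arXiv:1707.08210 — 2 statements merged into one kernel-verified Lean document; each statement's English description precedes it below -/
import Mathlib

section
/- Let (β_k)_{k≥1} be the increasing enumeration of the moduli of the zeros of U₊ on the open ray arg z = π/3, and set δ_k = (√3·β_k/2)³. Then δ_k = (√3/4)·(3/2)³·(πk − 5π/12 + O(1/k))² as k → ∞; equivalently, there is a constant C > 0 such that |√(δ_k/((√3/4)·(3/2)³)) − (πk − 5π/12)| ≤ C/k for all k ≥ 1. -/
open Complex MeasureTheory Real

noncomputable section

/-- `w` is an entire solution of the Airy equation `w'' = z·w`
with prescribed (real) values of `w` and `w'` at the origin. -/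
def IsAiry (w : ℂ → ℂ) (w0 w0' : ℝ) : Prop :=
  Differentiable ℂ w ∧ Differentiable ℂ (deriv w) ∧
  (∀ z : ℂ, deriv (deriv w) z = z * w z) ∧
  w 0 = (w0 : ℂ) ∧ deriv w 0 = (w0' : ℂ)

/-- `Ai` is the standard Airy function of the first kind. -/
def IsAiryAi (Ai : ℂ → ℂ) : Prop :=
  IsAiry Ai ((3 : ℝ) ^ (-(2 : ℝ)/3) / Real.Gamma (2/3))
    (-((3 : ℝ) ^ (-(1 : ℝ)/3)) / Real.Gamma (1/3))

/-- `Bi` is the standard Airy function of the second kind. -/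
def IsAiryBi (Bi : ℂ → ℂ) : Prop :=
  IsAiry Bi ((3 : ℝ) ^ (-(1 : ℝ)/6) / Real.Gamma (2/3))
    ((3 : ℝ) ^ ((1 : ℝ)/6) / Real.Gamma (1/3))

/-- `U₋ = -√3·Ai + Bi`. -/
def Uminus (Ai Bi : ℂ → ℂ) : ℂ → ℂ := fun z => -(Real.sqrt 3 : ℂ) * Ai z + Bi z

/-- `U₊ = √3·Ai + Bi`. -/
def Uplus (Ai Bi : ℂ → ℂ) : ℂ → ℂ := fun z => (Real.sqrt 3 : ℂ) * Ai z + Bi z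

/-- The moduli of the zeros of `U` on the open ray `arg z = π/3`. -/
def rayZeroModuli (U : ℂ → ℂ) : Set ℝ :=
  {r : ℝ | 0 < r ∧ U ((r : ℂ) * Complex.exp ((π/3 : ℝ) * Complex.I)) = 0}

/-!
On the ray `z = r e^{iπ/3}` the Airy equation becomes `y'' = -r y`, and the weights in `U₊` are
such that `y'(0) = 0`. Hence `U₊` is there a multiple of a real solution, which is also a sum of
Scorer integrals `∫₀^∞ exp(-t³/3 + c r t) dt` over the cube roots `c` of `-1`. In the variable
`ζ = 2/3 r^{3/2}` the function `r^{1/4} y` satisfies `u'' = -(1 + 5/(36 ζ²)) u`. The Prüfer angle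
of this equation, monotone and within `O(1/ζ)` of `ζ + L` for a constant `L`, places the `k`-th
zero, with the correct index, at `ζ = (k - 1/2) π - L + O(1/ζ)`. The saddle point `√z` of the
Scorer integral on the ray shows that `r^{1/4} y` is asymptotic to a multiple of
`cos (ζ - π/12)`, which forces `L = -π/12`.
-/

open Filter Set Topology

section Uniqueness

lemma eq_zero_of_hasDerivAt_smul_self {E : Type*} [NormedAddCommGroup E] [NormedSpace ℝ E]
    {q : ℝ → ℝ} (hq : Continuous q) {f f' : ℝ → E} (hf : ∀ t, HasDerivAt f (f' t) t)
    (hf' : ∀ t, HasDerivAt f' (q t • f t) t) {a : ℝ} (ha : f a = 0) (ha' : f' a = 0) (t : ℝ) :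
    f t = 0 := by
  let v : ℝ → E × E → E × E := fun x p => (p.2, q x • p.1)
  let I : Set ℝ := Ioo (min a t - 1) (max a t + 1)
  obtain ⟨K, hK⟩ := isCompact_Icc.exists_bound_of_continuousOn
    (hq.continuousOn (s := Icc (min a t - 1) (max a t + 1)))
  have hv : ∀ x ∈ I, LipschitzOnWith (max 1 (K.toNNReal * 1)) (v x) univ := fun x hx => by
    have hqx : LipschitzWith K.toNNReal fun e : E => q x • e :=
      (lipschitzWith_smul (q x)).weaken (by
        rw [← NNReal.coe_le_coe, coe_nnnorm]
        exact (hK x (Ioo_subset_Icc_self hx)).trans (Real.le_coe_toNNReal K))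
    exact (LipschitzWith.prod_snd.prodMk (hqx.comp LipschitzWith.prod_fst)).lipschitzOnWith
  have haI : a ∈ I := ⟨by linarith [min_le_left a t], by linarith [le_max_left a t]⟩
  have htI : t ∈ I := ⟨by linarith [min_le_right a t], by linarith [le_max_right a t]⟩
  have heq : EqOn (fun x => (f x, f' x)) 0 I :=
    ODE_solution_unique_of_mem_Ioo hv haI
      (fun x _ => ⟨(hf x).prodMk (hf' x), mem_univ _⟩)
      (fun x _ => ⟨(hasDerivAt_const x _).congr_deriv (by ext <;> simp [v]), mem_univ _⟩)
      (by simp [ha, ha'])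
  exact congrArg Prod.fst (heq htI)

lemma ne_zero_of_hasDerivAt_smul_self {E : Type*} [NormedAddCommGroup E] [NormedSpace ℝ E]
    {q : ℝ → ℝ} (hq : Continuous q) {f f' : ℝ → E} (hf : ∀ t, HasDerivAt f (f' t) t)
    (hf' : ∀ t, HasDerivAt f' (q t • f t) t) {a : ℝ} (ha : f a ≠ 0) (t : ℝ) (ht : f t = 0) :
    f' t ≠ 0 :=
  fun ht' => ha (eq_zero_of_hasDerivAt_smul_self hq hf hf' ht ht' a)

end Uniqueness

section PhaseAngle

lemma exists_angle_of_ne_zero {s : Set ℝ} (hs : IsOpen s) (hconv : Convex ℝ s) {a : ℝ}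
    (ha : a ∈ s) {γ γ' : ℝ → ℂ} (hγ : ∀ t ∈ s, HasDerivAt γ (γ' t) t)
    (hγ' : ContinuousOn γ' s) (hne : ∀ t ∈ s, γ t ≠ 0) :
    ∃ θ : ℝ → ℝ, θ a = (γ a).arg ∧ ∀ t ∈ s,
      HasDerivAt θ (γ' t / γ t).im t ∧ γ t = ‖γ t‖ * Complex.exp (θ t * Complex.I) := by
  have hcont : ContinuousOn (fun t => γ' t / γ t) s :=
    hγ'.div (fun t ht => (hγ t ht).continuousAt.continuousWithinAt) hne
  let lift : ℝ → ℂ := fun t => Complex.log (γ a) + ∫ x in a..t, γ' x / γ x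
  have hlift : ∀ t ∈ s, HasDerivAt lift (γ' t / γ t) t := fun t ht =>
    (intervalIntegral.integral_hasDerivAt_right
      (hcont.mono (hconv.ordConnected.uIcc_subset ha ht)).intervalIntegrable
      (hcont.stronglyMeasurableAtFilter hs t ht)
      (hcont.continuousAt (hs.mem_nhds ht))).const_add _
  have hquot : ∀ t ∈ s, HasDerivAt (fun t => γ t * Complex.exp (-lift t)) 0 t := fun t ht => by
    refine ((hγ t ht).mul (hlift t ht).neg.cexp).congr_deriv ?_
    field_simp [hne t ht]
    ring
  have hexp : ∀ t ∈ s, γ t = Complex.exp (lift t) := fun t ht => by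
    have hconst : γ t * Complex.exp (-lift t) = γ a * Complex.exp (-lift a) :=
      hs.is_const_of_deriv_eq_zero hconv.isPreconnected
        (fun x hx => (hquot x hx).differentiableAt.differentiableWithinAt)
        (fun x hx => (hquot x hx).deriv) ht ha
    have hlift_a : Complex.exp (lift a) = γ a := by
      simp [lift, Complex.exp_log (hne a ha)]
    rwa [Complex.exp_neg, Complex.exp_neg, hlift_a, mul_inv_cancel₀ (hne a ha),
      mul_inv_eq_one₀ (Complex.exp_ne_zero _)] at hconst
  refine ⟨fun t => (lift t).im, by simp [lift, Complex.log_im], fun t ht =>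
    ⟨Complex.imCLM.hasFDerivAt.comp_hasDerivAt t (hlift t ht), ?_⟩⟩
  rw [hexp t ht, Complex.norm_exp, Complex.ofReal_exp, ← Complex.exp_add, Complex.re_add_im]

lemma im_div_of_polar {ρ : ℝ} (hρ : ρ ≠ 0) (q φ : ℝ) :
    ((⟨-(ρ * Real.sin φ), (1 + q) * (ρ * Real.cos φ)⟩ : ℂ) /
      ⟨ρ * Real.cos φ, ρ * Real.sin φ⟩).im = 1 + q * Real.cos φ ^ 2 := by
  have hnormSq : Complex.normSq ⟨ρ * Real.cos φ, ρ * Real.sin φ⟩ = ρ ^ 2 := by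
    rw [Complex.normSq_mk]
    linear_combination ρ ^ 2 * Real.sin_sq_add_cos_sq φ
  rw [Complex.div_im, hnormSq]
  field_simp
  linear_combination Real.sin_sq_add_cos_sq φ

/-- The angle is that of `u - i u'`; it satisfies Prüfer's equation. -/
lemma exists_prufer_angle {s : Set ℝ} (hs : IsOpen s) (hconv : Convex ℝ s) {a : ℝ} (ha : a ∈ s)
    {u u' q : ℝ → ℝ} (hu : ∀ t ∈ s, HasDerivAt u (u' t) t)
    (hu' : ∀ t ∈ s, HasDerivAt u' (-(1 + q t) * u t) t) (hq : ContinuousOn q s)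
    (hne : ∀ t ∈ s, u t = 0 → u' t ≠ 0) :
    ∃ θ : ℝ → ℝ, θ a = Complex.arg ⟨u a, -u' a⟩ ∧ ∀ t ∈ s,
      HasDerivAt θ (1 + q t * Real.cos (θ t) ^ 2) t ∧ ∃ ρ > 0, u t = ρ * Real.cos (θ t) := by
  let γ : ℝ → ℂ := fun t => ⟨u t, -u' t⟩
  let γ' : ℝ → ℂ := fun t => ⟨u' t, (1 + q t) * u t⟩
  have hγ_def : ∀ t, γ t = u t - u' t * Complex.I := fun t => by
    apply Complex.ext <;> simp [γ]
  have hγ'_def : ∀ t, γ' t = u' t + (1 + q t) * u t * Complex.I := fun t => by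
    apply Complex.ext <;> simp [γ']
  have hγ : ∀ t ∈ s, HasDerivAt γ (γ' t) t := fun t ht => by
    rw [funext hγ_def, hγ'_def]
    refine ((hu t ht).ofReal_comp.sub ((hu' t ht).ofReal_comp.mul_const _)).congr_deriv ?_
    push_cast
    ring
  have hγ'_cont : ContinuousOn γ' s := by
    have hu_cont : ContinuousOn u s := fun t ht => (hu t ht).continuousAt.continuousWithinAt
    have hu'_cont : ContinuousOn u' s := fun t ht => (hu' t ht).continuousAt.continuousWithinAt
    rw [funext hγ'_def]
    fun_prop
  have hγ_ne : ∀ t ∈ s, γ t ≠ 0 := fun t ht h =>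
    hne t ht (congrArg Complex.re h) (neg_eq_zero.1 (congrArg Complex.im h))
  obtain ⟨θ, hθa, hθ⟩ := exists_angle_of_ne_zero hs hconv ha hγ hγ'_cont hγ_ne
  refine ⟨θ, hθa, fun t ht => ?_⟩
  obtain ⟨hθ', hpolar⟩ := hθ t ht
  set ρ := ‖γ t‖
  have hρ : 0 < ρ := norm_pos_iff.2 (hγ_ne t ht)
  have hre : u t = ρ * Real.cos (θ t) := by simpa using congrArg Complex.re hpolar
  have him : -u' t = ρ * Real.sin (θ t) := by simpa using congrArg Complex.im hpolar
  refine ⟨hθ'.congr_deriv ?_, ρ, hρ, hre⟩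
  rw [← im_div_of_polar hρ.ne' (q t) (θ t), ← hre, ← him, neg_neg]

lemma pos_of_oscillator_of_nonneg_le_one {b : ℝ} (hb : b < π / 2) {y y' p : ℝ → ℝ}
    (hy : ∀ x, HasDerivAt y (y' x) x) (hy' : ∀ x, HasDerivAt y' (-p x * y x) x)
    (hp : Continuous p) (hp01 : ∀ x ∈ Icc 0 b, p x ∈ Icc 0 1)
    (h0 : 0 < y 0) (h0' : y' 0 = 0) {x : ℝ} (hx : x ∈ Icc 0 b) : 0 < y x := by
  obtain ⟨θ, hθ0, hθ⟩ := exists_prufer_angle (q := fun x => p x - 1) isOpen_univ convex_univ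
    (mem_univ 0) (fun x _ => hy x) (fun x _ => (hy' x).congr_deriv (by ring)) (by fun_prop)
    (fun x _ => ne_zero_of_hasDerivAt_smul_self hp.neg hy hy' h0.ne' x)
  replace hθ0 : θ 0 = 0 := by
    rw [hθ0, h0', neg_zero]
    exact Complex.arg_ofReal_of_nonneg h0.le
  have hθ' := fun t => (hθ t (mem_univ t)).1
  have hθ_diff : Differentiable ℝ θ := fun t => (hθ' t).differentiableAt
  have hderiv : ∀ t ∈ interior (Icc 0 b), deriv θ t ∈ Icc 0 1 := fun t ht => by
    obtain ⟨hp0, hp1⟩ := hp01 t (interior_subset ht)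
    have hcos := Real.cos_sq_le_one (θ t)
    rw [(hθ' t).deriv]
    constructor <;> nlinarith [sq_nonneg (Real.cos (θ t))]
  have h0b : (0 : ℝ) ∈ Icc 0 b := ⟨le_rfl, hx.1.trans hx.2⟩
  have hθ_nonneg : 0 * (x - 0) ≤ θ x - θ 0 :=
    (convex_Icc 0 b).mul_sub_le_image_sub_of_le_deriv hθ_diff.continuous.continuousOn
      hθ_diff.differentiableOn (fun t ht => (hderiv t ht).1) 0 h0b x hx hx.1
  have hθ_le : θ x - θ 0 ≤ 1 * (x - 0) :=
    (convex_Icc 0 b).image_sub_le_mul_sub_of_deriv_le hθ_diff.continuous.continuousOn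
      hθ_diff.differentiableOn (fun t ht => (hderiv t ht).2) 0 h0b x hx hx.1
  obtain ⟨ρ, hρ, hyx⟩ := (hθ x (mem_univ x)).2
  rw [hyx]
  refine mul_pos hρ (Real.cos_pos_of_mem_Ioo ⟨?_, ?_⟩) <;> linarith [hx.2, Real.pi_pos]

end PhaseAngle

section ZeroCounting

lemma exists_le_and_le_add_of_monotoneOn_of_antitoneOn {a : ℝ} {φ ε : ℝ → ℝ}
    (hφ : MonotoneOn φ (Ici a)) (hφε : AntitoneOn (φ + ε) (Ici a))
    (hε : Tendsto ε atTop (𝓝 0)) :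
    ∃ L, ∀ t, a ≤ t → φ t ≤ L ∧ L ≤ φ t + ε t := by
  have hmono : Monotone fun t => φ (max a t) := fun s t hst =>
    hφ (le_max_left a s) (le_max_left a t) (max_le_max_left a hst)
  have heq : (fun t => φ (max a t)) =ᶠ[atTop] φ := by
    filter_upwards [eventually_ge_atTop a] with t ht
    rw [max_eq_right ht]
  have hupper : ∀ t, a ≤ t → ∀ᶠ x in atTop, φ x + ε x ≤ φ t + ε t := fun t ht => by
    filter_upwards [eventually_ge_atTop t] with x hx
    exact hφε ht (ht.trans hx) hx
  rcases tendsto_atTop_of_monotone hmono with htop | ⟨L, hL⟩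
  · have hsum := (htop.congr' heq).atTop_add hε
    obtain ⟨x, hx, hx'⟩ := ((hsum.eventually_gt_atTop _).and (hupper a le_rfl)).exists
    exact absurd hx hx'.not_gt
  · have hφL : Tendsto φ atTop (𝓝 L) := hL.congr' heq
    refine ⟨L, fun t ht => ⟨ge_of_tendsto hφL ?_, le_of_tendsto ?_ (hupper t ht)⟩⟩
    · filter_upwards [eventually_ge_atTop t] with x hx
      exact hφ ht (ht.trans hx) hx
    · simpa using hφL.add hε

lemma setOf_le_and_cos_eq_zero {α : ℝ} (hα : α ∈ Ioo (-(π / 2)) (π / 2)) :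
    {x | α ≤ x ∧ Real.cos x = 0} = range fun k : ℕ => (k + 1 / 2) * π := by
  have hpi := Real.pi_pos
  ext x
  simp only [mem_ofPred_eq, mem_range, Real.cos_eq_zero_iff]
  constructor
  · rintro ⟨hx, n, rfl⟩
    have hn : (-1 : ℝ) < n := by nlinarith [hα.1]
    lift n to ℕ using Int.lt_iff_add_one_le.1 (by exact_mod_cast hn)
    exact ⟨n, by push_cast; ring⟩
  · rintro ⟨k, rfl⟩
    refine ⟨?_, k, by push_cast; ring⟩
    nlinarith [hα.2, k.cast_nonneg (α := ℝ)]

lemma strictMono_phase_comp_eq {a : ℝ} {θ : ℝ → ℝ} (hcont : ContinuousOn θ (Ici a))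
    (hmono : StrictMonoOn θ (Ici a)) (htop : Tendsto θ atTop atTop)
    (ha : θ a ∈ Ioo (-(π / 2)) (π / 2)) {τ : ℕ → ℝ} (hτ : StrictMono τ)
    (hrange : range τ = {t | a ≤ t ∧ Real.cos (θ t) = 0}) (k : ℕ) :
    θ (τ k) = (k + 1 / 2) * π := by
  have hτ_mem : ∀ k, a ≤ τ k := fun k => (hrange.subset (mem_range_self k)).1
  have hθτ : StrictMono (θ ∘ τ) := fun m n hmn => hmono (hτ_mem m) (hτ_mem n) (hτ hmn)
  have hodd : StrictMono fun k : ℕ => (k + 1 / 2 : ℝ) * π := fun m n hmn => by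
    have : (m : ℝ) < n := by exact_mod_cast hmn
    have := Real.pi_pos
    dsimp only
    gcongr
  have himage : θ '' {t | a ≤ t ∧ Real.cos (θ t) = 0} = {x | θ a ≤ x ∧ Real.cos x = 0} := by
    ext x
    constructor
    · rintro ⟨t, ⟨hat, hcos⟩, rfl⟩
      exact ⟨hmono.monotoneOn self_mem_Ici hat hat, hcos⟩
    · rintro ⟨hx, hcos⟩
      obtain ⟨t, ht, rfl⟩ := intermediate_value_Ici hcont htop hx
      exact ⟨t, ⟨ht, hcos⟩, rfl⟩
  have hranges : range (θ ∘ τ) = range fun k : ℕ => (k + 1 / 2 : ℝ) * π := by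
    rw [range_comp, hrange, himage, setOf_le_and_cos_eq_zero ha]
  exact congrFun ((hθτ.range_inj hodd).1 hranges) k

/-- Prüfer's equation for `u'' = -(1 + c/t²) u` gives `0 ≤ (θ - t)' ≤ c/t²`. -/
lemma exists_phase_of_inverse_square {a c : ℝ} (ha : 0 < a) (hc : 0 ≤ c) {u u' : ℝ → ℝ}
    (hu : ∀ t ∈ Ioi 0, HasDerivAt u (u' t) t)
    (hu' : ∀ t ∈ Ioi 0, HasDerivAt u' (-(1 + c / t ^ 2) * u t) t)
    (hne : ∀ t ∈ Ioi 0, u t = 0 → u' t ≠ 0) (hpos : 0 < u a) :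
    ∃ θ : ℝ → ℝ, θ a ∈ Ioo (-(π / 2)) (π / 2) ∧ ContinuousOn θ (Ici a) ∧
      MonotoneOn (fun t => θ t - t) (Ici a) ∧
      AntitoneOn ((fun t => θ t - t) + fun t => c / t) (Ici a) ∧
      ∀ t ∈ Ici a, u t = 0 ↔ Real.cos (θ t) = 0 := by
  have hIci : ∀ t ∈ Ici a, t ∈ Ioi 0 := fun t ht => ha.trans_le ht
  obtain ⟨θ, hθa, hθ⟩ := exists_prufer_angle isOpen_Ioi (convex_Ioi 0) ha hu hu'
    (continuousOn_const.div (by fun_prop) fun t ht => (pow_pos (mem_Ioi.1 ht) 2).ne') hne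
  have hφ' : ∀ t ∈ Ioi (0 : ℝ),
      HasDerivAt (fun t => θ t - t) (c / t ^ 2 * Real.cos (θ t) ^ 2) t := fun t ht =>
    ((hθ t ht).1.sub (hasDerivAt_id t)).congr_deriv (by ring)
  have hφε' : ∀ t ∈ Ioi (0 : ℝ), HasDerivAt ((fun t => θ t - t) + fun t => c / t)
      (c / t ^ 2 * Real.cos (θ t) ^ 2 + -c / t ^ 2) t := fun t ht =>
    (hφ' t ht).add (((hasDerivAt_inv (ne_of_gt ht)).const_mul c).congr_deriv (by ring))
  refine ⟨θ, ?_, fun t ht => (hθ t (hIci t ht)).1.continuousAt.continuousWithinAt,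
    monotoneOn_of_hasDerivWithinAt_nonneg (convex_Ici a)
      (fun t ht => (hφ' t (hIci t ht)).continuousAt.continuousWithinAt)
      (fun t ht => (hφ' t (hIci t (interior_subset ht))).hasDerivWithinAt)
      (fun t _ => by positivity),
    antitoneOn_of_hasDerivWithinAt_nonpos (convex_Ici a)
      (fun t ht => (hφε' t (hIci t ht)).continuousAt.continuousWithinAt)
      (fun t ht => (hφε' t (hIci t (interior_subset ht))).hasDerivWithinAt) fun t _ => ?_,
    fun t ht => ?_⟩
  · rw [hθa, mem_Ioo, ← abs_lt, Complex.abs_arg_lt_pi_div_two_iff]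
    exact Or.inl hpos
  · have hle : c / t ^ 2 * Real.cos (θ t) ^ 2 ≤ c / t ^ 2 :=
      mul_le_of_le_one_right (by positivity) (Real.cos_sq_le_one _)
    rw [neg_div]
    linarith
  · obtain ⟨ρ, hρ, hu_polar⟩ := (hθ t (hIci t ht)).2
    rw [hu_polar, mul_eq_zero, or_iff_right hρ.ne']

/-- The phase `L` is the limit of `θ t - t` for the Prüfer angle `θ`. -/
lemma exists_zero_bounds_of_inverse_square {a c : ℝ} (ha : 0 < a) (hc : 0 ≤ c) {u u' : ℝ → ℝ}
    (hu : ∀ t ∈ Ioi 0, HasDerivAt u (u' t) t)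
    (hu' : ∀ t ∈ Ioi 0, HasDerivAt u' (-(1 + c / t ^ 2) * u t) t)
    (hne : ∀ t ∈ Ioi 0, u t = 0 → u' t ≠ 0) (hpos : ∀ t ∈ Ioc 0 a, 0 < u t)
    {τ : ℕ → ℝ} (hτ : StrictMono τ) (hrange : range τ = {t | 0 < t ∧ u t = 0}) :
    ∃ L ∈ Ioo (-(π / 2) - a) (π / 2 - a + c / a), ∀ k : ℕ,
      (k + 1 / 2) * π - L ≤ τ k ∧ τ k ≤ (k + 1 / 2) * π - L + c / τ k := by
  obtain ⟨θ, hθa, hcont, hφ, hφε, hzero⟩ :=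
    exists_phase_of_inverse_square ha hc hu hu' hne (hpos a ⟨ha, le_rfl⟩)
  obtain ⟨L, hL⟩ := exists_le_and_le_add_of_monotoneOn_of_antitoneOn hφ hφε
    (tendsto_const_nhds.div_atTop tendsto_id)
  have hθ_mono : StrictMonoOn θ (Ici a) := by
    simpa using hφ.add_strictMono strictMonoOn_id
  have hθ_top : Tendsto θ atTop atTop := by
    refine tendsto_atTop_mono' _ ?_ (tendsto_atTop_add_const_left _ (θ a - a) tendsto_id)
    filter_upwards [eventually_ge_atTop a] with t ht
    have hat := hφ self_mem_Ici ht ht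
    dsimp only [id] at hat ⊢
    linarith
  have hrange' : range τ = {t | a ≤ t ∧ Real.cos (θ t) = 0} := by
    rw [hrange]
    ext t
    constructor
    · rintro ⟨ht, hut⟩
      have hat : a ≤ t := not_lt.1 fun hta => (hpos t ⟨ht, hta.le⟩).ne' hut
      exact ⟨hat, (hzero t hat).1 hut⟩
    · exact fun ⟨hat, hcos⟩ => ⟨ha.trans_le hat, (hzero t hat).2 hcos⟩
  refine ⟨L, ⟨?_, ?_⟩, fun k => ?_⟩
  · linarith [(hL a le_rfl).1, hθa.1]
  · linarith [(hL a le_rfl).2, hθa.2]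
  · have hbounds := hL (τ k) (hrange'.subset (mem_range_self k)).1
    rw [strictMono_phase_comp_eq hcont hθ_mono hθ_top hθa hτ hrange' k] at hbounds
    constructor <;> linarith [hbounds.1, hbounds.2]

end ZeroCounting

section LiouvilleGreen

/-- The Liouville–Green variable `ζ = ∫₀ˣ √s ds` of the equation `y'' = -x y`; only the values
at `x ≥ 0` are meaningful. -/
def liouvilleGreen (x : ℝ) : ℝ := 2 / 3 * x ^ (3 / 2 : ℝ)

/-- The inverse of the Liouville–Green variable `liouvilleGreen` on the nonnegative half-line. -/
def liouvilleGreenInv (t : ℝ) : ℝ := (3 / 2 * t) ^ (2 / 3 : ℝ)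

lemma liouvilleGreenInv_liouvilleGreen {x : ℝ} (hx : 0 ≤ x) :
    liouvilleGreenInv (liouvilleGreen x) = x := by
  rw [liouvilleGreenInv, liouvilleGreen, ← mul_assoc]
  norm_num [← Real.rpow_mul hx]

lemma liouvilleGreen_liouvilleGreenInv {t : ℝ} (ht : 0 ≤ t) :
    liouvilleGreen (liouvilleGreenInv t) = t := by
  rw [liouvilleGreenInv, liouvilleGreen, ← Real.rpow_mul (by positivity)]
  norm_num
  ring

lemma liouvilleGreen_pos {x : ℝ} (hx : 0 < x) : 0 < liouvilleGreen x := by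
  unfold liouvilleGreen
  positivity

lemma liouvilleGreenInv_pos {t : ℝ} (ht : 0 < t) : 0 < liouvilleGreenInv t := by
  unfold liouvilleGreenInv
  positivity

lemma liouvilleGreen_sq {x : ℝ} (hx : 0 ≤ x) : liouvilleGreen x ^ 2 = 4 / 9 * x ^ 3 := by
  rw [liouvilleGreen, mul_pow, ← Real.rpow_mul_natCast hx]
  norm_num

lemma strictMonoOn_liouvilleGreen : StrictMonoOn liouvilleGreen (Ici 0) :=
  fun x hx z _ hxz => mul_lt_mul_of_pos_left
    (Real.rpow_lt_rpow hx hxz (by norm_num)) (by norm_num)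

lemma hasDerivAt_liouvilleGreenInv {t : ℝ} (ht : 0 < t) :
    HasDerivAt liouvilleGreenInv (liouvilleGreenInv t ^ (-(1 / 2) : ℝ)) t := by
  refine (((hasDerivAt_id t).const_mul (3 / 2)).rpow_const (p := 2 / 3)
    (Or.inl (by simpa using ht.ne'))).congr_deriv ?_
  rw [liouvilleGreenInv, ← Real.rpow_mul (by positivity)]
  norm_num

/-- The Liouville–Green transform `x^{1/4} y(x)` of `y` as a function of the Liouville–Green
variable. -/
def liouvilleTransform (y : ℝ → ℝ) (t : ℝ) : ℝ :=
  liouvilleGreenInv t ^ (1 / 4 : ℝ) * y (liouvilleGreenInv t)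

/-- The derivative of `liouvilleTransform y` for positive arguments, when `y'` is the derivative
of `y`. -/
def liouvilleTransformDeriv (y y' : ℝ → ℝ) (t : ℝ) : ℝ :=
  1 / 4 * liouvilleGreenInv t ^ (-(5 / 4) : ℝ) * y (liouvilleGreenInv t) +
    liouvilleGreenInv t ^ (-(1 / 4) : ℝ) * y' (liouvilleGreenInv t)

lemma liouvilleTransform_eq_zero_iff {y : ℝ → ℝ} {t : ℝ} (ht : 0 < t) :
    liouvilleTransform y t = 0 ↔ y (liouvilleGreenInv t) = 0 := by
  rw [liouvilleTransform, mul_eq_zero,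
    or_iff_right (Real.rpow_pos_of_pos (liouvilleGreenInv_pos ht) _).ne']

lemma hasDerivAt_liouvilleTransform {y y' : ℝ → ℝ} {t : ℝ} (ht : 0 < t)
    (hy : ∀ x ∈ Ioi 0, HasDerivAt y (y' x) x) :
    HasDerivAt (liouvilleTransform y) (liouvilleTransformDeriv y y' t) t := by
  have hx := liouvilleGreenInv_pos ht
  have hinv := hasDerivAt_liouvilleGreenInv ht
  refine ((hinv.rpow_const (p := 1 / 4) (Or.inl hx.ne')).mul
    ((hy _ hx).comp t hinv)).congr_deriv ?_
  rw [Function.comp_apply, liouvilleTransformDeriv]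
  generalize liouvilleGreenInv t = x at hx ⊢
  rw [show (-(5 / 4) : ℝ) = -(1 / 2) + (1 / 4 - 1) by norm_num,
    show (-(1 / 4) : ℝ) = -(1 / 2) + 1 / 4 by norm_num, Real.rpow_add hx, Real.rpow_add hx]
  ring

lemma hasDerivAt_liouvilleTransformDeriv {y y' : ℝ → ℝ} {t : ℝ} (ht : 0 < t)
    (hy : ∀ x ∈ Ioi 0, HasDerivAt y (y' x) x)
    (hy' : ∀ x ∈ Ioi 0, HasDerivAt y' (-x * y x) x) :
    HasDerivAt (liouvilleTransformDeriv y y')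
      (-(1 + 5 / 36 / t ^ 2) * liouvilleTransform y t) t := by
  have hx := liouvilleGreenInv_pos ht
  have hinv := hasDerivAt_liouvilleGreenInv ht
  refine ((((hinv.rpow_const (p := -(5 / 4)) (Or.inl hx.ne')).const_mul (1 / 4)).mul
    ((hy _ hx).comp t hinv)).add ((hinv.rpow_const (p := -(1 / 4)) (Or.inl hx.ne')).mul
    ((hy' _ hx).comp t hinv))).congr_deriv ?_
  have htx : t ^ 2 = 4 / 9 * liouvilleGreenInv t ^ 3 := by
    rw [← liouvilleGreen_sq hx.le, liouvilleGreen_liouvilleGreenInv ht.le]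
  rw [htx, liouvilleTransform]
  dsimp only [Function.comp_apply]
  generalize liouvilleGreenInv t = x at hx ⊢
  set s := x ^ (1 / 4 : ℝ) with hs_def
  have hs : 0 < s := Real.rpow_pos_of_pos hx _
  have hpow : ∀ (e : ℝ) (n : ℤ), e = n / 4 → x ^ e = s ^ n := fun e n he => by
    rw [he, hs_def, ← Real.rpow_mul_intCast hx.le]
    ring_nf
  have hxs : x = s ^ 4 := by
    rw [← Real.rpow_one x]
    exact_mod_cast hpow 1 4 (by norm_num)
  rw [hpow (-(1 / 2)) (-2) (by norm_num), hpow (-(5 / 4) - 1) (-9) (by norm_num),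
    hpow (-(5 / 4)) (-5) (by norm_num), hpow (-(1 / 4) - 1) (-5) (by norm_num),
    hpow (-(1 / 4)) (-1) (by norm_num)]
  generalize y x = yx, y' x = y'x
  simp only [hxs, zpow_neg, zpow_ofNat]
  field_simp
  ring

lemma liouvilleTransformDeriv_ne_zero {y y' : ℝ → ℝ} {t : ℝ} (ht : 0 < t)
    (hne : ∀ x, y x = 0 → y' x ≠ 0) (hzero : liouvilleTransform y t = 0) :
    liouvilleTransformDeriv y y' t ≠ 0 := by
  rw [liouvilleTransform_eq_zero_iff ht] at hzero
  rw [liouvilleTransformDeriv, hzero, mul_zero, zero_add]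
  exact mul_ne_zero (Real.rpow_pos_of_pos (liouvilleGreenInv_pos ht) _).ne' (hne _ hzero)

lemma image_liouvilleGreen_zeros (y : ℝ → ℝ) :
    liouvilleGreen '' {x | 0 < x ∧ y x = 0} = {t | 0 < t ∧ liouvilleTransform y t = 0} := by
  ext t
  constructor
  · rintro ⟨x, ⟨hx, hyx⟩, rfl⟩
    have ht := liouvilleGreen_pos hx
    exact ⟨ht, (liouvilleTransform_eq_zero_iff ht).2 (by
      rwa [liouvilleGreenInv_liouvilleGreen hx.le])⟩
  · rintro ⟨ht, hyt⟩
    exact ⟨liouvilleGreenInv t, ⟨liouvilleGreenInv_pos ht,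
      (liouvilleTransform_eq_zero_iff ht).1 hyt⟩, liouvilleGreen_liouvilleGreenInv ht.le⟩

lemma liouvilleGreenInv_le_one {t : ℝ} (ht : t ∈ Ioc 0 (2 / 3)) : liouvilleGreenInv t ≤ 1 :=
  Real.rpow_le_one (by linarith [ht.1]) (by linarith [ht.2]) (by norm_num)

lemma exists_airy_zero_bounds {y y' : ℝ → ℝ} (hy : ∀ x, HasDerivAt y (y' x) x)
    (hy' : ∀ x, HasDerivAt y' (-x * y x) x) (h0 : 0 < y 0) (h0' : y' 0 = 0) {β : ℕ → ℝ}
    (hβ : StrictMono β) (hrange : range β = {x | 0 < x ∧ y x = 0}) :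
    ∃ L ∈ Ioo (-(π / 2) - 2 / 3) (π / 2 - 2 / 3 + 5 / 36 / (2 / 3)), ∀ k : ℕ,
      (k + 1 / 2) * π - L ≤ liouvilleGreen (β k) ∧
      liouvilleGreen (β k) ≤ (k + 1 / 2) * π - L + 5 / 36 / liouvilleGreen (β k) := by
  have hβ_pos : ∀ k, 0 < β k := fun k => (hrange.subset (mem_range_self k)).1
  have hy_pos : ∀ x ∈ Icc 0 1, 0 < y x := fun x hx =>
    pos_of_oscillator_of_nonneg_le_one (by linarith [Real.pi_gt_three]) hy hy' continuous_id
      (fun _ h => h) h0 h0' hx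
  refine exists_zero_bounds_of_inverse_square (u := liouvilleTransform y)
    (by norm_num) (by norm_num)
    (fun t ht => hasDerivAt_liouvilleTransform ht fun x _ => hy x)
    (fun t ht => hasDerivAt_liouvilleTransformDeriv ht (fun x _ => hy x) fun x _ => hy' x)
    (fun t ht => liouvilleTransformDeriv_ne_zero ht
      (ne_zero_of_hasDerivAt_smul_self continuous_neg hy hy' h0.ne')) (fun t ht => ?_)
    (fun m n hmn => strictMonoOn_liouvilleGreen (hβ_pos m).le (hβ_pos n).le (hβ hmn)) ?_
  · have hx := liouvilleGreenInv_pos ht.1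
    exact mul_pos (Real.rpow_pos_of_pos hx _) (hy_pos _ ⟨hx.le, liouvilleGreenInv_le_one ht⟩)
  · rw [← image_liouvilleGreen_zeros, ← hrange]
    exact range_comp liouvilleGreen β

end LiouvilleGreen

section Scorer

/-- The moments `∫₀^∞ tⁿ exp(-t³/3 + z t) dt`; for `n = 0` this is `π` times the Scorer
function `Hi`. -/
def scorerMoment (n : ℕ) (z : ℂ) : ℂ :=
  ∫ t in Ioi (0 : ℝ), (t : ℂ) ^ n * Complex.exp (-(t : ℂ) ^ 3 / 3 + z * t)

lemma exp_neg_cube_add_mul_le (a : ℝ) {t : ℝ} (ht : 0 ≤ t) :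
    Real.exp (-t ^ 3 / 3 + a * t) ≤ Real.exp (4 / 3 + (a + 1) ^ 2 / 4) * Real.exp (-t) := by
  rw [← Real.exp_add, Real.exp_le_exp]
  nlinarith [mul_nonneg (sq_nonneg (t - 2)) (by linarith : 0 ≤ t + 1),
    sq_nonneg (t - (a + 1) / 2)]

lemma tendsto_exp_neg_cube_add_mul (a : ℝ) :
    Tendsto (fun t : ℝ => Real.exp (-t ^ 3 / 3 + a * t)) atTop (𝓝 0) := by
  have hlim := Real.tendsto_exp_neg_atTop_nhds_zero.const_mul
    (Real.exp (4 / 3 + (a + 1) ^ 2 / 4))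
  rw [mul_zero] at hlim
  refine squeeze_zero' (Eventually.of_forall fun _ => (Real.exp_pos _).le) ?_ hlim
  filter_upwards [eventually_ge_atTop 0] with t ht using exp_neg_cube_add_mul_le a ht

lemma integrableOn_pow_mul_exp_neg_cube (n : ℕ) (a : ℝ) :
    IntegrableOn (fun t : ℝ => t ^ n * Real.exp (-t ^ 3 / 3 + a * t)) (Ioi 0) := by
  have hGamma := (Real.GammaIntegral_convergent (s := n + 1) (by positivity)).const_mul
    (Real.exp (4 / 3 + (a + 1) ^ 2 / 4))
  refine hGamma.mono' (by fun_prop) ?_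
  filter_upwards [ae_restrict_mem measurableSet_Ioi] with t ht
  have ht : 0 < t := ht
  rw [Real.norm_of_nonneg (by positivity), add_sub_cancel_right, Real.rpow_natCast, mul_comm,
    ← mul_assoc]
  gcongr
  exact exp_neg_cube_add_mul_le a ht.le

lemma norm_scorer_integrand (n : ℕ) (z : ℂ) {t : ℝ} (ht : 0 ≤ t) :
    ‖(t : ℂ) ^ n * Complex.exp (-(t : ℂ) ^ 3 / 3 + z * t)‖ =
      t ^ n * Real.exp (-t ^ 3 / 3 + z.re * t) := by
  rw [norm_mul, norm_pow, Complex.norm_real, Real.norm_of_nonneg ht, Complex.norm_exp,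
    show (-(t : ℂ) ^ 3 / 3) = ((-t ^ 3 / 3 : ℝ) : ℂ) by push_cast; ring, Complex.add_re,
    Complex.ofReal_re, Complex.re_mul_ofReal]

lemma integrableOn_scorer_integrand (n : ℕ) (z : ℂ) :
    IntegrableOn (fun t : ℝ => (t : ℂ) ^ n * Complex.exp (-(t : ℂ) ^ 3 / 3 + z * t)) (Ioi 0) := by
  refine (integrableOn_pow_mul_exp_neg_cube n z.re).mono' (by fun_prop) ?_
  filter_upwards [ae_restrict_mem measurableSet_Ioi] with t ht
  exact (norm_scorer_integrand n z (mem_Ioi.1 ht).le).le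

lemma hasDerivAt_scorerMoment (n : ℕ) (z : ℂ) :
    HasDerivAt (scorerMoment n) (scorerMoment (n + 1) z) z := by
  refine (hasDerivAt_integral_of_dominated_loc_of_deriv_le
    (F' := fun z (t : ℝ) => (t : ℂ) ^ (n + 1) * Complex.exp (-(t : ℂ) ^ 3 / 3 + z * t))
    (Metric.ball_mem_nhds z one_pos) (Eventually.of_forall fun w =>
      (integrableOn_scorer_integrand n w).aestronglyMeasurable)
    (integrableOn_scorer_integrand n z)
    (integrableOn_scorer_integrand (n + 1) z).aestronglyMeasurable ?_
    (integrableOn_pow_mul_exp_neg_cube (n + 1) (z.re + 1))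
    (Eventually.of_forall fun t w _ => ?_)).2
  · filter_upwards [ae_restrict_mem measurableSet_Ioi] with t ht w hw
    have ht : 0 < t := ht
    have hre : w.re ≤ z.re + 1 := by
      have hsub := (Complex.re_le_norm (w - z)).trans (mem_ball_iff_norm.1 hw).le
      rw [Complex.sub_re] at hsub
      linarith
    rw [norm_scorer_integrand _ _ ht.le]
    gcongr
  · refine ((((hasDerivAt_id w).mul_const (t : ℂ)).const_add
      (-(t : ℂ) ^ 3 / 3)).cexp.const_mul ((t : ℂ) ^ n)).congr_deriv ?_
    simp only [id]
    ring

lemma scorerMoment_two (z : ℂ) : scorerMoment 2 z = z * scorerMoment 0 z + 1 := by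
  let F : ℝ → ℂ := fun t => (t : ℂ) ^ 0 * Complex.exp (-(t : ℂ) ^ 3 / 3 + z * t)
  have hderiv : ∀ t : ℝ, HasDerivAt F
      (z * F t - (t : ℂ) ^ 2 * Complex.exp (-(t : ℂ) ^ 3 / 3 + z * t)) t := fun t => by
    have hcube : HasDerivAt (fun t : ℝ => -(t : ℂ) ^ 3 / 3) (-(t : ℂ) ^ 2) t :=
      ((hasDerivAt_pow 3 (t : ℂ)).neg.div_const 3).comp_ofReal.congr_deriv (by push_cast; ring)
    refine ((hcube.add ((hasDerivAt_id t).ofReal_comp.const_mul z)).cexp.const_mul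
      ((t : ℂ) ^ 0)).congr_deriv ?_
    simp only [F, Pi.add_apply, id]
    push_cast
    ring
  have hlim : Tendsto F atTop (𝓝 0) := by
    refine tendsto_zero_iff_norm_tendsto_zero.2 ((tendsto_exp_neg_cube_add_mul z.re).congr' ?_)
    filter_upwards [eventually_ge_atTop 0] with t ht
    rw [norm_scorer_integrand 0 z ht, pow_zero, one_mul]
  have hint0 := (integrableOn_scorer_integrand 0 z).const_mul z
  have hint2 := integrableOn_scorer_integrand 2 z
  have hFTC := integral_Ioi_of_hasDerivAt_of_tendsto (hderiv 0).continuousAt.continuousWithinAt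
    (fun t _ => hderiv t) (hint0.sub hint2) hlim
  have hF0 : F 0 = 1 := by simp [F]
  rw [integral_sub hint0 hint2, integral_const_mul, hF0] at hFTC
  simp only [scorerMoment]
  linear_combination -hFTC

lemma integral_Ioi_eq_vertical_add_shift {F : ℂ → ℂ} (hF : Differentiable ℂ F) {b : ℝ}
    (hb : 0 ≤ b) {g : ℝ → ℝ} (hg : IntegrableOn g (Ioi 0)) (hg0 : Tendsto g atTop (𝓝 0))
    (hbound : ∀ s : ℝ, 0 ≤ s → ∀ v ∈ Icc 0 b, ‖F (s + v * Complex.I)‖ ≤ g s) :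
    ∫ s in Ioi (0 : ℝ), F s = Complex.I * (∫ v in (0 : ℝ)..b, F (v * Complex.I)) +
      ∫ s in Ioi (0 : ℝ), F (s + b * Complex.I) := by
  have hcont := hF.continuous
  have hrect : ∀ T : ℝ, ∫ s in (0 : ℝ)..T, F s = Complex.I * (∫ v in (0 : ℝ)..b,
      F (v * Complex.I)) + (∫ s in (0 : ℝ)..T, F (s + b * Complex.I)) -
        Complex.I * ∫ v in (0 : ℝ)..b, F (T + v * Complex.I) := fun T => by
    have hboundary := Complex.integral_boundary_rect_eq_zero_of_differentiableOn F 0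
      (T + b * Complex.I) hF.differentiableOn
    simp only [Complex.zero_re, Complex.zero_im, Complex.ofReal_zero, zero_mul, add_zero,
      Complex.add_re, Complex.add_im, Complex.ofReal_re, Complex.ofReal_im, Complex.mul_re,
      Complex.mul_im, Complex.I_re, Complex.I_im, mul_zero, mul_one, sub_self, zero_add,
      smul_eq_mul] at hboundary
    linear_combination hboundary
  have hint : ∀ v ∈ Icc 0 b, IntegrableOn (fun s : ℝ => F (s + v * Complex.I)) (Ioi 0) :=
    fun v hv => by
      refine Integrable.mono' hg (by fun_prop) ?_
      filter_upwards [ae_restrict_mem measurableSet_Ioi] with s hs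
      exact hbound s (mem_Ioi.1 hs).le v hv
  have hside : Tendsto (fun T : ℝ => ∫ v in (0 : ℝ)..b, F (T + v * Complex.I)) atTop (𝓝 0) := by
    refine squeeze_zero_norm' ?_ (by simpa only [zero_mul] using hg0.mul_const |b - 0|)
    filter_upwards [eventually_ge_atTop 0] with T hT
    refine intervalIntegral.norm_integral_le_of_norm_le_const fun v hv => ?_
    rw [uIoc_of_le hb] at hv
    exact hbound T hT v (Ioc_subset_Icc_self hv)
  have hbottom := intervalIntegral_tendsto_integral_Ioi 0
    (by simpa using hint 0 ⟨le_rfl, hb⟩) tendsto_id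
  have htop := intervalIntegral_tendsto_integral_Ioi 0 (hint b ⟨hb, le_rfl⟩) tendsto_id
  refine tendsto_nhds_unique hbottom ?_
  simpa [hrect] using (htop.const_add _).sub (hside.const_mul Complex.I)

lemma scorer_exponent_re (z : ℂ) (s v : ℝ) :
    (-((s : ℂ) + v * Complex.I) ^ 3 / 3 + z * (s + v * Complex.I)).re =
      -s ^ 3 / 3 + (v ^ 2 + z.re) * s - v * z.im := by
  rw [show -((s : ℂ) + v * Complex.I) ^ 3 / 3 + z * (s + v * Complex.I) =
      ((-s ^ 3 / 3 + v ^ 2 * s : ℝ) : ℂ) + ((-s ^ 2 * v + v ^ 3 / 3 : ℝ) : ℂ) * Complex.I +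
        z * (s + v * Complex.I) by
      push_cast
      linear_combination (-(s : ℂ) * v ^ 2 - v ^ 3 / 3 * Complex.I) * Complex.I_sq]
  simp only [Complex.add_re, Complex.mul_re, Complex.add_im, Complex.mul_im, Complex.ofReal_re,
    Complex.ofReal_im, Complex.I_re, Complex.I_im]
  ring

lemma scorerMoment_zero_eq_vertical_add_shift (z : ℂ) {b : ℝ} (hb : 0 ≤ b) :
    scorerMoment 0 z =
      Complex.I * (∫ v in (0 : ℝ)..b,
        Complex.exp (-(v * Complex.I) ^ 3 / 3 + z * (v * Complex.I))) +
      ∫ s in Ioi (0 : ℝ),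
        Complex.exp (-(s + b * Complex.I) ^ 3 / 3 + z * (s + b * Complex.I)) := by
  have hint := (integrableOn_pow_mul_exp_neg_cube 0 (b ^ 2 + z.re)).const_mul
    (Real.exp (b * ‖z‖))
  have hlim := (tendsto_exp_neg_cube_add_mul (b ^ 2 + z.re)).const_mul (Real.exp (b * ‖z‖))
  simp only [pow_zero, one_mul, mul_zero] at hint hlim
  simp only [scorerMoment, pow_zero, one_mul]
  refine integral_Ioi_eq_vertical_add_shift
    (F := fun w => Complex.exp (-w ^ 3 / 3 + z * w)) (by fun_prop) hb hint hlim
    fun s hs v hv => ?_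
  rw [Complex.norm_exp, scorer_exponent_re, ← Real.exp_add, Real.exp_le_exp]
  obtain ⟨hv0, hvb⟩ := hv
  have him : -(v * z.im) ≤ b * ‖z‖ :=
    calc -(v * z.im) = v * -z.im := (mul_neg _ _).symm
      _ ≤ v * ‖z‖ := by gcongr; exact (neg_le_abs _).trans (Complex.abs_im_le_norm z)
      _ ≤ b * ‖z‖ := by gcongr
  have hsq : v ^ 2 * s ≤ b ^ 2 * s := by gcongr
  linarith

lemma integral_Ioi_exp_neg_mul {m : ℝ} (hm : 0 < m) :
    ∫ t in Ioi (0 : ℝ), Real.exp (-m * t) = 1 / m := by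
  rw [integral_exp_mul_Ioi (neg_lt_zero.2 hm)]
  simp

lemma norm_scorerMoment_neg_le {r : ℝ} (hr : 0 < r) : ‖scorerMoment 0 (-(r : ℂ))‖ ≤ 1 / r := by
  rw [← integral_Ioi_exp_neg_mul hr]
  refine norm_integral_le_of_norm_le (integrableOn_exp_mul_Ioi (neg_lt_zero.2 hr) 0) ?_
  filter_upwards [ae_restrict_mem measurableSet_Ioi] with t ht
  have hcube : 0 < t ^ 3 := pow_pos ht 3
  rw [norm_scorer_integrand 0 _ (mem_Ioi.1 ht).le, pow_zero, one_mul, Complex.neg_re,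
    Complex.ofReal_re]
  gcongr
  linarith

end Scorer

section SaddlePoint

/-- The direction `e^{iπ/3}` of the ray carrying the zeros. -/
def rayDirection : ℂ := Complex.exp ((π / 3 : ℝ) * Complex.I)

/-- The direction `e^{iπ/6}` of the saddle point `√z` of the Scorer exponent `-t³/3 + z t` when
`z` has direction `rayDirection`. -/
def saddleDirection : ℂ := Complex.exp ((π / 6 : ℝ) * Complex.I)

lemma saddleDirection_sq : saddleDirection ^ 2 = rayDirection := by
  rw [saddleDirection, rayDirection, ← Complex.exp_nat_mul]
  congr 1
  push_cast
  ring

lemma rayDirection_pow_three : rayDirection ^ 3 = -1 := by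
  rw [rayDirection, ← Complex.exp_nat_mul, ← Complex.exp_pi_mul_I]
  congr 1
  push_cast
  ring

lemma saddleDirection_mul_rayDirection : saddleDirection * rayDirection = Complex.I := by
  rw [saddleDirection, rayDirection, ← Complex.exp_add, ← add_mul, ← Complex.ofReal_add,
    show π / 6 + π / 3 = π / 2 by ring, Complex.ofReal_div, Complex.ofReal_ofNat,
    Complex.exp_pi_div_two_mul_I]

lemma saddleDirection_re : saddleDirection.re = √3 / 2 := by
  rw [saddleDirection, Complex.exp_ofReal_mul_I_re, Real.cos_pi_div_six]

lemma saddleDirection_im : saddleDirection.im = 1 / 2 := by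
  rw [saddleDirection, Complex.exp_ofReal_mul_I_im, Real.sin_pi_div_six]

lemma rayDirection_re : rayDirection.re = 1 / 2 := by
  rw [rayDirection, Complex.exp_ofReal_mul_I_re, Real.cos_pi_div_three]

lemma rayDirection_im : rayDirection.im = √3 / 2 := by
  rw [rayDirection, Complex.exp_ofReal_mul_I_im, Real.sin_pi_div_three]

lemma integral_gaussian_saddleDirection :
    ∫ x : ℝ, Complex.exp (-saddleDirection * (x : ℂ) ^ 2) =
      √π * Complex.exp ((-(π / 12) : ℝ) * Complex.I) := by
  have hpi := Real.pi_pos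
  have hquot : (π : ℂ) / saddleDirection = (π : ℝ) * Complex.exp ((-(π / 6) : ℝ) * Complex.I) := by
    rw [saddleDirection, div_eq_mul_inv, ← Complex.exp_neg]
    push_cast
    ring_nf
  have hlog : Complex.log (Complex.exp ((-(π / 6) : ℝ) * Complex.I)) =
      (-(π / 6) : ℝ) * Complex.I :=
    Complex.log_exp (by rw [Complex.im_ofReal_mul, Complex.I_im]; linarith)
      (by rw [Complex.im_ofReal_mul, Complex.I_im]; linarith)
  have hsqrt : ((√π : ℝ) : ℂ) = Complex.exp (Real.log π / 2 : ℝ) := by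
    rw [← Complex.ofReal_exp, Real.exp_half, Real.exp_log hpi]
  rw [integral_gaussian_complex (by rw [saddleDirection_re]; positivity), hquot,
    Complex.cpow_def_of_ne_zero (by simp [hpi.ne']),
    Complex.log_ofReal_mul hpi (Complex.exp_ne_zero _), hlog, hsqrt, ← Complex.exp_add]
  congr 1
  push_cast
  ring

lemma norm_vertical_integral_le {r b : ℝ} (hr : 0 < r) (hb : 0 ≤ b) :
    ‖∫ v in (0 : ℝ)..b, Complex.exp (-(v * Complex.I) ^ 3 / 3 +
      r * rayDirection * (v * Complex.I))‖ ≤ 1 / (√3 / 2 * r) := by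
  have hm : 0 < √3 / 2 * r := by positivity
  have hnorm : ∀ v : ℝ, ‖Complex.exp (-(v * Complex.I) ^ 3 / 3 +
      r * rayDirection * (v * Complex.I))‖ = Real.exp (-(√3 / 2 * r) * v) := fun v => by
    have hre := scorer_exponent_re (r * rayDirection) 0 v
    rw [Complex.ofReal_zero, zero_add, Complex.im_ofReal_mul, rayDirection_im] at hre
    rw [Complex.norm_exp, hre]
    ring_nf
  refine (intervalIntegral.norm_integral_le_of_norm_le hb
    (Eventually.of_forall fun v _ => (hnorm v).le)
    (Continuous.intervalIntegrable (by fun_prop) _ _)).trans ?_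
  rw [← integral_Ioi_exp_neg_mul hm, intervalIntegral.integral_of_le hb]
  exact setIntegral_mono_set (integrableOn_exp_mul_Ioi (neg_lt_zero.2 hm) 0)
    (Eventually.of_forall fun t => (Real.exp_pos _).le) Ioc_subset_Ioi_self.eventuallyLE

/-- The integrand of the shifted Scorer integral at `z = l⁴ e^{iπ/3}`, in the coordinate `x` for
which the variable of integration is `l² e^{iπ/6} + x / l`, divided by its value at the saddle
point `x = 0`. -/
def saddleIntegrand (l : ℝ) : ℝ → ℂ :=
  (Ioi (-(√3 / 2 * l ^ 3))).indicator fun x =>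
    Complex.exp (-saddleDirection * (x : ℂ) ^ 2 - (x ^ 3 / (3 * l ^ 3) : ℝ))

lemma scorer_exponent_at_saddle_add {l : ℝ} (hl : l ≠ 0) (x : ℝ) :
    -((l : ℂ) ^ 2 * saddleDirection + x / l) ^ 3 / 3 +
      (l : ℂ) ^ 4 * rayDirection * ((l : ℂ) ^ 2 * saddleDirection + x / l) =
      (2 / 3 * l ^ 6 : ℝ) * Complex.I +
        (-saddleDirection * (x : ℂ) ^ 2 - (x ^ 3 / (3 * l ^ 3) : ℝ)) := by
  have hl' : (l : ℂ) ≠ 0 := by exact_mod_cast hl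
  rw [← saddleDirection_mul_rayDirection, ← saddleDirection_sq]
  push_cast
  field_simp
  ring

/-- The height `l² / 2` of the shifted contour is that of the saddle point `l² e^{iπ/6}`. -/
lemma mul_integral_shift_eq_integral_saddleIntegrand {l : ℝ} (hl : 0 < l) :
    (l : ℂ) * ∫ s in Ioi (0 : ℝ), Complex.exp (-(s + (l ^ 2 / 2 : ℝ) * Complex.I) ^ 3 / 3 +
        (l ^ 4 : ℝ) * rayDirection * (s + (l ^ 2 / 2 : ℝ) * Complex.I)) =
      Complex.exp ((2 / 3 * l ^ 6 : ℝ) * Complex.I) * ∫ x, saddleIntegrand l x := by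
  let g : ℝ → ℂ := (Ioi (0 : ℝ)).indicator fun s =>
    Complex.exp (-(s + (l ^ 2 / 2 : ℝ) * Complex.I) ^ 3 / 3 +
      (l ^ 4 : ℝ) * rayDirection * (s + (l ^ 2 / 2 : ℝ) * Complex.I))
  have hsubst : ∫ x, g (√3 / 2 * l ^ 2 + x / l) = l * ∫ s, g s := by
    rw [Measure.integral_comp_div (fun s => g (√3 / 2 * l ^ 2 + s)) l,
      integral_add_left_eq_self, abs_of_pos hl, Complex.real_smul]
  have hdomain : ∀ x : ℝ, √3 / 2 * l ^ 2 + x / l ∈ Ioi 0 ↔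
      x ∈ Ioi (-(√3 / 2 * l ^ 3)) := fun x => by
    rw [mem_Ioi, mem_Ioi, show √3 / 2 * l ^ 2 + x / l = (√3 / 2 * l ^ 3 + x) / l by field_simp,
      div_pos_iff_of_pos_right hl, neg_lt_iff_pos_add']
  have hpoint : ∀ x : ℝ, (√3 / 2 * l ^ 2 + x / l : ℝ) + (l ^ 2 / 2 : ℝ) * Complex.I =
      (l : ℂ) ^ 2 * saddleDirection + x / l := fun x => by
    rw [← Complex.re_add_im saddleDirection, saddleDirection_re, saddleDirection_im]
    push_cast
    ring
  rw [← integral_indicator measurableSet_Ioi, ← hsubst, ← integral_const_mul]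
  congr 1
  ext x
  by_cases hx : x ∈ Ioi (-(√3 / 2 * l ^ 3))
  · simp only [g, saddleIntegrand]
    rw [indicator_of_mem ((hdomain x).2 hx), indicator_of_mem hx, hpoint, Complex.ofReal_pow,
      scorer_exponent_at_saddle_add hl.ne', Complex.exp_add]
  · simp only [g, saddleIntegrand]
    rw [indicator_of_notMem (mt (hdomain x).1 hx), indicator_of_notMem hx, mul_zero]

lemma norm_saddleIntegrand_le {l : ℝ} (hl : 0 < l) (x : ℝ) :
    ‖saddleIntegrand l x‖ ≤ Real.exp (-(1 / 2) * x ^ 2) := by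
  by_cases hx : x ∈ Ioi (-(√3 / 2 * l ^ 3))
  · have hsqrt : 3 / 2 ≤ √3 := Real.le_sqrt_of_sq_le (by norm_num)
    have hcube : -(√3 / 6 * x ^ 2) ≤ x ^ 3 / (3 * l ^ 3) := by
      rw [le_div_iff₀ (by positivity)]
      nlinarith [mul_nonneg (sq_nonneg x) (by linarith [mem_Ioi.1 hx] : 0 ≤ x + √3 / 2 * l ^ 3)]
    rw [saddleIntegrand, indicator_of_mem hx, Complex.norm_exp, Real.exp_le_exp,
      Complex.sub_re, Complex.ofReal_re, ← Complex.ofReal_pow, Complex.re_mul_ofReal,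
      Complex.neg_re, saddleDirection_re]
    nlinarith [sq_nonneg x]
  · rw [saddleIntegrand, indicator_of_notMem hx, norm_zero]
    positivity

lemma tendsto_saddleIntegrand (x : ℝ) :
    Tendsto (fun l => saddleIntegrand l x) atTop
      (𝓝 (Complex.exp (-saddleDirection * (x : ℂ) ^ 2))) := by
  have hcube : Tendsto (fun l : ℝ => l ^ 3) atTop atTop := tendsto_pow_atTop (by norm_num)
  have hcorr : Tendsto (fun l : ℝ => x ^ 3 / (3 * l ^ 3)) atTop (𝓝 0) :=
    (hcube.const_mul_atTop (by norm_num)).const_div_atTop _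
  have hlim := (((Complex.continuous_ofReal.tendsto 0).comp hcorr).const_sub
    (-saddleDirection * (x : ℂ) ^ 2)).cexp
  rw [Complex.ofReal_zero, sub_zero] at hlim
  refine hlim.congr' ?_
  filter_upwards [(hcube.const_mul_atTop
    (by positivity : 0 < √3 / 2)).eventually_gt_atTop (-x)] with l hl
  rw [saddleIntegrand, indicator_of_mem (mem_Ioi.2 (neg_lt.1 hl))]
  rfl

lemma tendsto_integral_saddleIntegrand :
    Tendsto (fun l => ∫ x, saddleIntegrand l x) atTop
      (𝓝 (√π * Complex.exp ((-(π / 12) : ℝ) * Complex.I))) := by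
  rw [← integral_gaussian_saddleDirection]
  refine tendsto_integral_filter_of_dominated_convergence
    (fun x => Real.exp (-(1 / 2) * x ^ 2)) (Eventually.of_forall fun l => ?_) ?_
    (integrable_exp_neg_mul_sq (by norm_num)) (Eventually.of_forall tendsto_saddleIntegrand)
  · exact (Continuous.aestronglyMeasurable (by fun_prop)).indicator measurableSet_Ioi
  · filter_upwards [eventually_gt_atTop 0] with l hl
    exact Eventually.of_forall (norm_saddleIntegrand_le hl)

lemma tendsto_scorerMoment_ray :
    Tendsto (fun l : ℝ => Complex.exp (-((2 / 3 * l ^ 6 : ℝ) * Complex.I)) *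
        (l * scorerMoment 0 ((l ^ 4 : ℝ) * rayDirection))) atTop
      (𝓝 (√π * Complex.exp ((-(π / 12) : ℝ) * Complex.I))) := by
  let vertical : ℝ → ℂ := fun l => Complex.exp (-((2 / 3 * l ^ 6 : ℝ) * Complex.I)) *
    (l * (Complex.I * ∫ v in (0 : ℝ)..l ^ 2 / 2, Complex.exp (-(v * Complex.I) ^ 3 / 3 +
      (l ^ 4 : ℝ) * rayDirection * (v * Complex.I))))
  have hvertical : Tendsto vertical atTop (𝓝 0) := by
    have hcube : Tendsto (fun l : ℝ => 1 / (√3 / 2 * l ^ 3)) atTop (𝓝 0) :=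
      ((tendsto_pow_atTop (by norm_num)).const_mul_atTop (by positivity)).const_div_atTop 1
    refine squeeze_zero_norm' ?_ hcube
    filter_upwards [eventually_gt_atTop 0] with l hl
    have hsegment := norm_vertical_integral_le (pow_pos hl 4) (by positivity : 0 ≤ l ^ 2 / 2)
    rw [norm_mul, ← neg_mul, ← Complex.ofReal_neg, Complex.norm_exp_ofReal_mul_I, one_mul,
      norm_mul, norm_mul, Complex.norm_I, one_mul, Complex.norm_of_nonneg hl.le]
    calc l * _ ≤ l * (1 / (√3 / 2 * l ^ 4)) := by gcongr
      _ = 1 / (√3 / 2 * l ^ 3) := by field_simp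
  have hsum := hvertical.add tendsto_integral_saddleIntegrand
  rw [zero_add] at hsum
  refine hsum.congr' ?_
  filter_upwards [eventually_gt_atTop 0] with l hl
  rw [scorerMoment_zero_eq_vertical_add_shift _ (by positivity : 0 ≤ l ^ 2 / 2), mul_add, mul_add,
    mul_integral_shift_eq_integral_saddleIntegrand hl, ← mul_assoc (Complex.exp _)
    (Complex.exp _), ← Complex.exp_add, neg_add_cancel, Complex.exp_zero, one_mul]

end SaddlePoint

section RaySum

lemma hasDerivAt_comp_ofReal_mul {f : ℂ → ℂ} {f' c : ℂ} {r : ℝ} (hf : HasDerivAt f f' (r * c)) :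
    HasDerivAt (fun s : ℝ => f (s * c)) (c * f') r :=
  ((hf.comp (r : ℂ) ((hasDerivAt_id (r : ℂ)).mul_const c)).comp_ofReal).congr_deriv (by ring)

lemma hasDerivAt_scorerMoment_ray (n : ℕ) (c : ℂ) (r : ℝ) :
    HasDerivAt (fun s : ℝ => scorerMoment n (s * c)) (c * scorerMoment (n + 1) (r * c)) r :=
  hasDerivAt_comp_ofReal_mul (hasDerivAt_scorerMoment n _)

lemma hasDerivAt_mul_scorerMoment_one_ray {c : ℂ} (hc : c ^ 3 = -1) (r : ℝ) :
    HasDerivAt (fun s : ℝ => c * scorerMoment 1 (s * c))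
      (-r * scorerMoment 0 (r * c) + c ^ 2) r := by
  refine ((hasDerivAt_scorerMoment_ray 1 c r).const_mul c).congr_deriv ?_
  rw [scorerMoment_two]
  linear_combination (r : ℂ) * scorerMoment 0 (r * c) * hc

lemma hasDerivAt_re {f : ℝ → ℂ} {f' : ℂ} {r : ℝ} (hf : HasDerivAt f f' r) :
    HasDerivAt (fun s => (f s).re) f'.re r :=
  Complex.reCLM.hasFDerivAt.comp_hasDerivAt r hf

/-- The sum of the Scorer integrals `scorerMoment 0 (r c)` over the cube roots `c` of `-1`, namely
`-1`, `rayDirection` and its conjugate. The inhomogeneous terms `c²` of the Scorer equation cancel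
in it. -/
def raySum (r : ℝ) : ℝ :=
  (scorerMoment 0 (r * -1)).re + 2 * (scorerMoment 0 (r * rayDirection)).re

/-- The derivative of `raySum`. -/
def raySumDeriv (r : ℝ) : ℝ :=
  (-1 * scorerMoment 1 (r * -1)).re + 2 * (rayDirection * scorerMoment 1 (r * rayDirection)).re

lemma hasDerivAt_raySum (r : ℝ) : HasDerivAt raySum (raySumDeriv r) r :=
  (hasDerivAt_re (hasDerivAt_scorerMoment_ray 0 _ r)).add
    ((hasDerivAt_re (hasDerivAt_scorerMoment_ray 0 _ r)).const_mul 2)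

lemma rayDirection_sq_re : (rayDirection ^ 2).re = -(1 / 2) := by
  rw [sq, Complex.mul_re, rayDirection_re, rayDirection_im, ← sq (√3 / 2), div_pow,
    Real.sq_sqrt (by norm_num)]
  norm_num

lemma hasDerivAt_raySumDeriv (r : ℝ) : HasDerivAt raySumDeriv (-r * raySum r) r := by
  refine ((hasDerivAt_re (hasDerivAt_mul_scorerMoment_one_ray (by norm_num) r)).add
    ((hasDerivAt_re (hasDerivAt_mul_scorerMoment_one_ray rayDirection_pow_three r)).const_mul
      2)).congr_deriv ?_
  rw [raySum, Complex.add_re, Complex.add_re, rayDirection_sq_re, neg_one_sq, Complex.one_re,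
    ← Complex.ofReal_neg, Complex.re_ofReal_mul, Complex.re_ofReal_mul]
  ring

lemma scorerMoment_at_zero (n : ℕ) :
    scorerMoment n 0 = (∫ t in Ioi (0 : ℝ), t ^ n * Real.exp (-t ^ 3 / 3) : ℝ) := by
  rw [scorerMoment, ← integral_complex_ofReal]
  simp only [zero_mul, add_zero]
  push_cast
  rfl

lemma raySum_zero_pos : 0 < raySum 0 := by
  have hint : IntegrableOn (fun t : ℝ => Real.exp (-t ^ 3 / 3)) (Ioi 0) := by
    simpa only [zero_mul, add_zero, pow_zero, one_mul] using
      integrableOn_pow_mul_exp_neg_cube 0 0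
  have hpos : 0 < ∫ t in Ioi (0 : ℝ), Real.exp (-t ^ 3 / 3) := by
    rw [setIntegral_pos_iff_support_of_nonneg_ae
      (Eventually.of_forall fun t => (Real.exp_pos _).le) hint,
      Function.support_eq_univ fun t => (Real.exp_pos _).ne', univ_inter, Real.volume_Ioi]
    exact ENNReal.zero_lt_top
  simp only [raySum, Complex.ofReal_zero, zero_mul, scorerMoment_at_zero, Complex.ofReal_re,
    pow_zero, one_mul]
  linarith

lemma raySumDeriv_zero : raySumDeriv 0 = 0 := by
  simp only [raySumDeriv, Complex.ofReal_zero, zero_mul, scorerMoment_at_zero,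
    Complex.re_mul_ofReal, rayDirection_re, Complex.neg_re, Complex.one_re]
  ring

lemma tendsto_re_sub_of_tendsto_exp_mul {ι : Type*} {l : Filter ι} {θ : ι → ℝ} {g : ι → ℂ}
    {c : ℂ} (h : Tendsto (fun i => Complex.exp (-(θ i * Complex.I)) * g i) l (𝓝 c)) :
    Tendsto (fun i => (g i).re - (Complex.exp (θ i * Complex.I) * c).re) l (𝓝 0) := by
  refine squeeze_zero_norm (fun i => ?_) (tendsto_iff_norm_sub_tendsto_zero.1 h)
  have hfactor : g i - Complex.exp (θ i * Complex.I) * c =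
      Complex.exp (θ i * Complex.I) * (Complex.exp (-(θ i * Complex.I)) * g i - c) := by
    rw [mul_sub, ← mul_assoc, ← Complex.exp_add, add_neg_cancel, Complex.exp_zero, one_mul]
  calc ‖(g i).re - (Complex.exp (θ i * Complex.I) * c).re‖
      ≤ ‖g i - Complex.exp (θ i * Complex.I) * c‖ := by
        rw [← Complex.sub_re]
        exact Complex.abs_re_le_norm _
    _ = ‖Complex.exp (-(θ i * Complex.I)) * g i - c‖ := by
        rw [hfactor, norm_mul, Complex.norm_exp_ofReal_mul_I, one_mul]

lemma tendsto_scorerMoment_ray_re_sub_cos :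
    Tendsto (fun r : ℝ => r ^ (1 / 4 : ℝ) * (scorerMoment 0 (r * rayDirection)).re -
      √π * Real.cos (liouvilleGreen r - π / 12)) atTop (𝓝 0) := by
  refine (tendsto_re_sub_of_tendsto_exp_mul (tendsto_scorerMoment_ray.comp
    (tendsto_rpow_atTop (by norm_num : (0 : ℝ) < 1 / 4)))).congr' ?_
  filter_upwards [eventually_ge_atTop 0] with r hr
  have hpow_four : (r ^ (1 / 4 : ℝ)) ^ 4 = r := by
    rw [← Real.rpow_mul_natCast hr]
    norm_num
  have hpow_six : 2 / 3 * (r ^ (1 / 4 : ℝ)) ^ 6 = liouvilleGreen r := by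
    rw [liouvilleGreen, ← Real.rpow_mul_natCast hr]
    norm_num
  rw [hpow_four, hpow_six, Complex.re_ofReal_mul, mul_left_comm, ← Complex.exp_add, ← add_mul,
    ← Complex.ofReal_add, Complex.re_ofReal_mul, Complex.exp_ofReal_mul_I_re, ← sub_eq_add_neg]

lemma tendsto_scorerMoment_neg_re :
    Tendsto (fun r : ℝ => r ^ (1 / 4 : ℝ) * (scorerMoment 0 (r * -1)).re) atTop (𝓝 0) := by
  refine squeeze_zero_norm' ?_ (tendsto_rpow_neg_atTop (by norm_num : (0 : ℝ) < 3 / 4))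
  filter_upwards [eventually_gt_atTop 0] with r hr
  rw [mul_neg_one, norm_mul, Real.norm_of_nonneg (Real.rpow_nonneg hr.le _)]
  calc r ^ (1 / 4 : ℝ) * ‖(scorerMoment 0 (-(r : ℂ))).re‖
      ≤ r ^ (1 / 4 : ℝ) * (1 / r) := by
        gcongr
        exact (Complex.abs_re_le_norm _).trans (norm_scorerMoment_neg_le hr)
    _ = r ^ (-(3 / 4) : ℝ) := by
        rw [mul_one_div, ← Real.rpow_sub_one hr.ne']
        norm_num

lemma tendsto_raySum_sub_cos :
    Tendsto (fun r : ℝ => r ^ (1 / 4 : ℝ) * raySum r -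
      2 * √π * Real.cos (liouvilleGreen r - π / 12)) atTop (𝓝 0) := by
  have hsum := tendsto_scorerMoment_neg_re.add
    (tendsto_scorerMoment_ray_re_sub_cos.const_mul 2)
  rw [mul_zero, add_zero] at hsum
  refine hsum.congr fun r => ?_
  rw [raySum]
  ring

end RaySum

section AiryRay

variable {w : ℂ → ℂ} {w0 w0' : ℝ}

lemma IsAiry.hasDerivAt_ray (hw : IsAiry w w0 w0') (c : ℂ) (r : ℝ) :
    HasDerivAt (fun s : ℝ => w (s * c)) (c * deriv w (r * c)) r :=
  hasDerivAt_comp_ofReal_mul (hw.1 _).hasDerivAt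

lemma IsAiry.hasDerivAt_deriv_ray (hw : IsAiry w w0 w0') {c : ℂ} (hc : c ^ 3 = -1) (r : ℝ) :
    HasDerivAt (fun s : ℝ => c * deriv w (s * c)) (-r * w (r * c)) r := by
  refine ((hasDerivAt_comp_ofReal_mul (hw.2.1 _).hasDerivAt).const_mul c).congr_deriv ?_
  rw [hw.2.2.1]
  linear_combination (r : ℂ) * w (r * c) * hc

lemma IsAiry.mul_raySum_zero_eq (hw : IsAiry w w0 0) (r : ℝ) :
    w (r * rayDirection) * raySum 0 = w0 * raySum r := by
  obtain ⟨-, -, -, hw0, hw0'⟩ := id hw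
  refine sub_eq_zero.1 (eq_zero_of_hasDerivAt_smul_self (a := 0)
    (f := fun r : ℝ => w (r * rayDirection) * raySum 0 - w0 * raySum r)
    (f' := fun r : ℝ => rayDirection * deriv w (r * rayDirection) * raySum 0 - w0 * raySumDeriv r)
    continuous_neg
    (fun t => ((hw.hasDerivAt_ray _ t).mul_const _).sub
      ((hasDerivAt_raySum t).ofReal_comp.const_mul _))
    (fun t => (((hw.hasDerivAt_deriv_ray rayDirection_pow_three t).mul_const _).sub
      ((hasDerivAt_raySumDeriv t).ofReal_comp.const_mul _)).congr_deriv ?_) ?_ ?_ r)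
  · rw [Complex.real_smul]
    push_cast
    ring
  · rw [Complex.ofReal_zero, zero_mul, hw0, sub_self]
  · rw [Complex.ofReal_zero, zero_mul, hw0', raySumDeriv_zero, Complex.ofReal_zero]
    ring

lemma IsAiry.rayZeroModuli_eq (hw : IsAiry w w0 0) (hw0 : w0 ≠ 0) :
    rayZeroModuli w = {r | 0 < r ∧ raySum r = 0} := by
  ext r
  refine and_congr_right fun _ => ?_
  have hw0' : (w0 : ℂ) ≠ 0 := Complex.ofReal_ne_zero.2 hw0
  have hsum0 : (raySum 0 : ℂ) ≠ 0 := Complex.ofReal_ne_zero.2 raySum_zero_pos.ne'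
  rw [← rayDirection, ← mul_eq_zero_iff_right hsum0, hw.mul_raySum_zero_eq,
    mul_eq_zero_iff_left hw0', Complex.ofReal_eq_zero]

lemma IsAiry.const_mul_add {v : ℂ → ℂ} {v0 v0' : ℝ} (hv : IsAiry v v0 v0')
    (hw : IsAiry w w0 w0') (a : ℝ) :
    IsAiry (fun z => a * v z + w z) (a * v0 + w0) (a * v0' + w0') := by
  obtain ⟨hv1, hv2, hv3, hv4, hv5⟩ := hv
  obtain ⟨hw1, hw2, hw3, hw4, hw5⟩ := hw
  have hderiv : deriv (fun z => a * v z + w z) = fun z => a * deriv v z + deriv w z :=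
    funext fun z => (((hv1 z).hasDerivAt.const_mul _).add (hw1 z).hasDerivAt).deriv
  have hderiv2 : ∀ z, deriv (fun z => a * deriv v z + deriv w z) z =
      a * deriv (deriv v) z + deriv (deriv w) z := fun z =>
    (((hv2 z).hasDerivAt.const_mul _).add (hw2 z).hasDerivAt).deriv
  refine ⟨(hv1.const_mul _).add hw1, ?_, fun z => ?_, ?_, ?_⟩
  · rw [hderiv]
    exact (hv2.const_mul _).add hw2
  · rw [hderiv, hderiv2, hv3, hw3]
    ring
  · simp only [hv4, hw4]
    push_cast
    rfl
  · simp only [hderiv, hv5, hw5]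
    push_cast
    rfl

lemma IsAiryAi.uplus {Ai Bi : ℂ → ℂ} (hAi : IsAiryAi Ai) (hBi : IsAiryBi Bi) :
    IsAiry (Uplus Ai Bi) (2 * (3 : ℝ) ^ (-(1 : ℝ) / 6) / Real.Gamma (2 / 3)) 0 := by
  have hvalue : √3 * (3 : ℝ) ^ (-(2 : ℝ) / 3) = 3 ^ (-(1 : ℝ) / 6) := by
    rw [Real.sqrt_eq_rpow, ← Real.rpow_add (by norm_num)]
    norm_num
  have hslope : √3 * (3 : ℝ) ^ (-(1 : ℝ) / 3) = 3 ^ ((1 : ℝ) / 6) := by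
    rw [Real.sqrt_eq_rpow, ← Real.rpow_add (by norm_num)]
    norm_num
  have hcomb := hAi.const_mul_add hBi √3
  rwa [← mul_div_assoc, hvalue, ← two_mul, ← mul_div_assoc, ← mul_div_assoc, mul_neg, hslope,
    neg_div (Real.Gamma (1 / 3)), neg_add_cancel] at hcomb

lemma rayZeroModuli_uplus {Ai Bi : ℂ → ℂ} (hAi : IsAiryAi Ai) (hBi : IsAiryBi Bi) :
    rayZeroModuli (Uplus Ai Bi) = {r | 0 < r ∧ raySum r = 0} :=
  (hAi.uplus hBi).rayZeroModuli_eq (by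
    have := Real.Gamma_pos_of_pos (by norm_num : (0 : ℝ) < 2 / 3)
    positivity)

end AiryRay

section ZeroAsymptotics

lemma sin_eq_zero_of_tendsto_cos {θ : ℕ → ℝ} {L a : ℝ}
    (hθ : Tendsto (fun k : ℕ => θ k - ((k + 1 / 2) * π - L)) atTop (𝓝 0))
    (hcos : Tendsto (fun k => Real.cos (θ k - a)) atTop (𝓝 0)) : Real.sin (L + a) = 0 := by
  have habs (k : ℕ) : |Real.cos ((k + 1 / 2) * π - L - a)| = |Real.sin (L + a)| := by
    rw [show (k + 1 / 2) * π - L - a = k * π + (π / 2 - (L + a)) by ring, add_comm,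
      Real.cos_add_nat_mul_pi, Real.cos_pi_div_two_sub, abs_mul, abs_pow, abs_neg, abs_one,
      one_pow, one_mul]
  have hdist : Tendsto (fun k => |Real.cos (θ k - a)| - |Real.sin (L + a)|) atTop (𝓝 0) := by
    refine squeeze_zero_norm (fun k => ?_) (tendsto_zero_iff_abs_tendsto_zero _ |>.1 hθ)
    rw [← habs k]
    refine (abs_abs_sub_abs_le _ _).trans ((Real.abs_cos_sub_cos_le _ _).trans_eq ?_)
    rw [sub_sub_sub_cancel_right, Function.comp_apply]
  have hlim := hcos.abs.sub hdist
  simp only [sub_sub_cancel, abs_zero, sub_zero] at hlim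
  exact abs_eq_zero.1 (tendsto_nhds_unique tendsto_const_nhds hlim)

lemma tendsto_of_tendsto_liouvilleGreen {ι : Type*} {l : Filter ι} {β : ι → ℝ}
    (hβ : ∀ k, 0 ≤ β k) (h : Tendsto (fun k => liouvilleGreen (β k)) l atTop) :
    Tendsto β l atTop := by
  have hinv : Tendsto liouvilleGreenInv atTop atTop :=
    (tendsto_rpow_atTop (by norm_num)).comp (tendsto_id.const_mul_atTop (by norm_num))
  exact (hinv.comp h).congr fun k => liouvilleGreenInv_liouvilleGreen (hβ k)

lemma tendsto_cos_of_raySum_eq_zero {ι : Type*} {l : Filter ι} {β : ι → ℝ}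
    (hβ : Tendsto β l atTop) (hzero : ∀ k, raySum (β k) = 0) :
    Tendsto (fun k => Real.cos (liouvilleGreen (β k) - π / 12)) l (𝓝 0) := by
  have hlim := (tendsto_raySum_sub_cos.comp hβ).const_mul (-(2 * √π)⁻¹)
  rw [mul_zero] at hlim
  have hpi : 2 * √π ≠ 0 := by positivity
  refine hlim.congr fun k => ?_
  rw [Function.comp_apply, hzero, mul_zero, zero_sub, neg_mul_neg, inv_mul_cancel_left₀ hpi]

lemma phase_eq_of_sin_eq_zero {L : ℝ}
    (hL : L ∈ Ioo (-(π / 2) - 2 / 3) (π / 2 - 2 / 3 + 5 / 36 / (2 / 3)))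
    (hsin : Real.sin (L + π / 12) = 0) : L = -(π / 12) := by
  have hpi := Real.pi_gt_three
  obtain ⟨hlow, hup⟩ := hL
  exact eq_neg_of_add_eq_zero_left
    ((Real.sin_eq_zero_iff_of_lt_of_lt (by linarith) (by linarith)).1 hsin)

lemma abs_liouvilleGreen_sub_le {β : ℕ → ℝ} (hβ : StrictMono β)
    (hrange : range β = {r | 0 < r ∧ raySum r = 0}) (k : ℕ) :
    |liouvilleGreen (β k) - (π * (k + 1) - 5 * π / 12)| ≤ 5 / 36 / (k + 1) := by
  have hmem : ∀ k, 0 < β k ∧ raySum (β k) = 0 := fun k => hrange.subset (mem_range_self k)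
  obtain ⟨L, hL, hbounds⟩ := exists_airy_zero_bounds hasDerivAt_raySum hasDerivAt_raySumDeriv
    raySum_zero_pos raySumDeriv_zero hβ hrange
  have hgrid : Tendsto (fun k : ℕ => (k + 1 / 2) * π - L) atTop atTop :=
    tendsto_atTop_add_const_right _ _ ((tendsto_atTop_add_const_right _ _
      tendsto_natCast_atTop_atTop).atTop_mul_const Real.pi_pos)
  have hθ := tendsto_atTop_mono (fun k => (hbounds k).1) hgrid
  have hclose : Tendsto (fun k : ℕ => liouvilleGreen (β k) - ((k + 1 / 2) * π - L)) atTop (𝓝 0) :=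
    squeeze_zero (fun k => sub_nonneg.2 (hbounds k).1)
      (fun k => sub_le_iff_le_add'.2 (hbounds k).2) (hθ.const_div_atTop _)
  have hcos := tendsto_cos_of_raySum_eq_zero
    (tendsto_of_tendsto_liouvilleGreen (fun k => (hmem k).1.le) hθ) fun k => (hmem k).2
  obtain rfl := phase_eq_of_sin_eq_zero hL (sin_eq_zero_of_tendsto_cos hclose hcos)
  obtain ⟨hlow, hup⟩ := hbounds k
  have hindex : (k : ℝ) + 1 ≤ liouvilleGreen (β k) := by
    nlinarith [Real.pi_gt_three, k.cast_nonneg (α := ℝ)]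
  have herror : 5 / 36 / liouvilleGreen (β k) ≤ 5 / 36 / (k + 1) := by gcongr
  rw [abs_le]
  constructor <;> linarith [(by positivity : (0 : ℝ) ≤ 5 / 36 / (k + 1))]

lemma sqrt_delta_eq {b : ℝ} (hb : 0 ≤ b) :
    √((√3 * b / 2) ^ 3 / (√3 / 4 * (3 / 2) ^ 3)) = liouvilleGreen b := by
  have hnonneg : 0 ≤ liouvilleGreen b := by
    unfold liouvilleGreen
    positivity
  have hthree : √3 ^ 2 = 3 := Real.sq_sqrt (by norm_num)
  have hsq : (√3 * b / 2) ^ 3 / (√3 / 4 * (3 / 2) ^ 3) = liouvilleGreen b ^ 2 := by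
    rw [liouvilleGreen_sq hb]
    field_simp
    rw [hthree]
    ring
  rw [hsq, Real.sqrt_sq hnonneg]

end ZeroAsymptotics

/-- Asymptotics of the values `δ_k = (√3·β_k/2)³`:
`δ_k = (√3/4)(3/2)³(πk − 5π/12 + O(1/k))²` as `k → ∞` (here `β` enumerates the moduli
of the zeros of `U₊` on the ray `arg z = π/3` increasingly, indexed from `0`,
so `β (k-1)` is the paper's `β_k`). -/
theorem delta_asymptotics (Ai Bi : ℂ → ℂ)
    (hAi : IsAiryAi Ai) (hBi : IsAiryBi Bi)
    (β : ℕ → ℝ) (hmono : StrictMono β)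
    (hrange : Set.range β = rayZeroModuli (Uplus Ai Bi)) :
    ∃ C : ℝ, 0 < C ∧ ∀ k : ℕ,
      |Real.sqrt ((Real.sqrt 3 * β k / 2) ^ 3 / (Real.sqrt 3 / 4 * (3 / 2) ^ 3))
        - (π * (k + 1) - 5 * π / 12)| ≤ C / (k + 1) := by
  rw [rayZeroModuli_uplus hAi hBi] at hrange
  refine ⟨5 / 36, by norm_num, fun k => ?_⟩
  have hβ_pos : 0 < β k := (hrange.subset (mem_range_self k)).1
  rw [sqrt_delta_eq hβ_pos.le]
  exact abs_liouvilleGreen_sub_le hmono hrange k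
end
end

section
/- For every ε > 0 and every λ ∈ ℂ with Im λ ≠ 0, if W(ε,λ) = 0 then ∂W/∂λ(ε,λ) ≠ 0. In other words, every non-real eigenvalue of the model operator T(ε) is a simple eigenvalue: collisions of eigenvalues of the model family T(ε) are impossible outside the real axis. -/
open Complex MeasureTheory Real

noncomputable section

/-- The characteristic determinant `W(ε,λ)` of the model problem
`-ε⁻¹ y'' + i x y = λ y`, `y(-1) = y(1) = 0`. -/
def airyW (Ai Bi : ℂ → ℂ) (ε : ℝ) (lam : ℂ) : ℂ :=
  Ai ((ε ^ ((1:ℝ)/3) : ℝ) * (lam + Complex.I)) * Bi ((ε ^ ((1:ℝ)/3) : ℝ) * (lam - Complex.I))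
  - Ai ((ε ^ ((1:ℝ)/3) : ℝ) * (lam - Complex.I)) * Bi ((ε ^ ((1:ℝ)/3) : ℝ) * (lam + Complex.I))

/-!
At a non-simple zero `lam` of `airyW Ai Bi ε`, every solution `u` of the Airy equation takes the
same value, up to sign, at the two points `ε^{1/3} (lam ± i)`. This is impossible for the solution
that is recessive on the positive real axis. Its flux `Im (conj u * u')` satisfies
`∂ₓ flux = y * |u|²` and vanishes as `x → +∞`, so it is negative in the upper half plane; since
`∂ᵧ |u|² = -2 * flux`, the modulus `|u|` strictly increases with `y ≥ 0` on vertical lines. By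
reflection `|u|` then takes equal values at points of equal real part only if their imaginary parts
agree up to sign, which for the two points above means `lam.im = 0`.

The recessive solution is obtained from Scorer's function `Hi z = ∫₀^∞ exp (z * t - t ^ 3 / 3) dt`,
which satisfies `Hi'' = z * Hi + 1`: for a cube root of unity `ω`, the function `ω * Hi (ω * z)`
satisfies the same equation, and the difference of two such functions is a solution of Airy's.
-/

open Filter Topology Set ProbabilityTheory ComplexConjugate

/-- Solutions on `ℂ` of the Airy equation `u'' = z * u`, without initial conditions. -/
structure IsAirySolution (u : ℂ → ℂ) : Prop where
  differentiable : Differentiable ℂ u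
  deriv_deriv : ∀ z, deriv (deriv u) z = z * u z

/-- The Wronskian `u * v' - u' * v`. -/
def wronskian (u v : ℂ → ℂ) (z : ℂ) : ℂ := u z * deriv v z - deriv u z * v z

/-- The probability flux `Im (conj u * u')` of quantum mechanics, through which the modulus of a
solution of a second order equation is controlled. -/
def flux (u : ℂ → ℂ) (z : ℂ) : ℝ := (conj (u z) * deriv u z).im

/-- Decay of a function and of its derivative at the right end of every horizontal line, as for the
solution of the Airy equation that is recessive on the positive real axis. -/
structure IsRecessive (u : ℂ → ℂ) : Prop where
  tendsto : ∀ s : ℝ, Tendsto (fun x : ℝ => u (x + s * I)) atTop (𝓝 0)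
  tendsto_deriv : ∀ s : ℝ, Tendsto (fun x : ℝ => deriv u (x + s * I)) atTop (𝓝 0)

section AirySolution

variable {u v w : ℂ → ℂ}

lemma IsAirySolution.hasDerivAt (hu : IsAirySolution u) (z : ℂ) : HasDerivAt u (deriv u z) z :=
  (hu.differentiable z).hasDerivAt

lemma IsAirySolution.hasDerivAt_deriv (hu : IsAirySolution u) (z : ℂ) :
    HasDerivAt (deriv u) (z * u z) z :=
  hu.deriv_deriv z ▸ (hu.differentiable.deriv z).hasDerivAt

lemma IsAiry.isAirySolution {u₀ u₀' : ℝ} (hu : IsAiry u u₀ u₀') : IsAirySolution u :=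
  ⟨hu.1, hu.2.2.1⟩

lemma wronskian_eq_wronskian_zero (hu : IsAirySolution u) (hv : IsAirySolution v) (z : ℂ) :
    wronskian u v z = wronskian u v 0 := by
  have hderiv (z : ℂ) : HasDerivAt (wronskian u v) 0 z :=
    (((hu.hasDerivAt z).mul (hv.hasDerivAt_deriv z)).sub
      ((hu.hasDerivAt_deriv z).mul (hv.hasDerivAt z))).congr_deriv (by ring)
  exact is_const_of_deriv_eq_zero (fun z => (hderiv z).differentiableAt)
    (fun z => (hderiv z).deriv) z 0

lemma exists_eq_linear_combination (hu : IsAirySolution u) (hv : IsAirySolution v)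
    (huv : wronskian u v 0 ≠ 0) (hw : IsAirySolution w) :
    ∃ p q : ℂ, ∀ z, w z = p * u z + q * v z := by
  refine ⟨wronskian w v 0 / wronskian u v 0, wronskian u w 0 / wronskian u v 0, fun z => ?_⟩
  rw [← wronskian_eq_wronskian_zero hu hv z] at huv ⊢
  rw [← wronskian_eq_wronskian_zero hw hv z, ← wronskian_eq_wronskian_zero hu hw z]
  field_simp
  simp only [wronskian]
  ring

lemma sq_eq_sq_of_cross_eq_zero (hu : IsAirySolution u) (hv : IsAirySolution v)
    (huv : wronskian u v 0 ≠ 0) (hw : IsAirySolution w) {a b : ℂ}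
    (hcross : u a * v b - u b * v a = 0)
    (hcross' : deriv u a * v b + u a * deriv v b - (deriv u b * v a + u b * deriv v a) = 0) :
    w a ^ 2 = w b ^ 2 := by
  obtain ⟨p, q, hw⟩ := exists_eq_linear_combination hu hv huv hw
  have ha := wronskian_eq_wronskian_zero hu hv a
  have hb := wronskian_eq_wronskian_zero hu hv b
  simp only [wronskian] at ha hb huv
  apply mul_left_cancel₀ huv
  rw [hw, hw]
  linear_combination (p * u a + q * v a) * (p * u b + q * v b) * hcross' -
    ((p * deriv u a + q * deriv v a) * (p * u b + q * v b) +
      (p * u a + q * v a) * (p * deriv u b + q * deriv v b)) * hcross +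
    (p * u b + q * v b) ^ 2 * ha - (p * u a + q * v a) ^ 2 * hb

lemma hasDerivAt_flux_horizontal (hu : IsAirySolution u) (x s : ℝ) :
    HasDerivAt (fun x : ℝ => flux u (x + s * I)) (s * ‖u (x + s * I)‖ ^ 2) x := by
  have hu₁ := ((hu.hasDerivAt (x + s * I)).comp_add_const (x : ℂ) (s * I)).comp_ofReal
  have hu₂ := ((hu.hasDerivAt_deriv (x + s * I)).comp_add_const (x : ℂ) (s * I)).comp_ofReal
  refine (imCLM.hasFDerivAt.comp_hasDerivAt x (hu₁.star.mul hu₂)).congr_deriv ?_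
  rw [← normSq_eq_norm_sq, normSq_apply]
  simp only [RCLike.star_def, imCLM_apply, add_im, mul_im, conj_re, conj_im, neg_mul, add_re,
    ofReal_re, mul_re, I_re, mul_zero, ofReal_im, I_im, mul_one, sub_self, add_zero, zero_add]
  ring

lemma hasDerivAt_norm_sq_vertical (hu : Differentiable ℂ u) (x s : ℝ) :
    HasDerivAt (fun s : ℝ => ‖u (x + s * I)‖ ^ 2) (-2 * flux u (x + s * I)) s := by
  have hline : HasDerivAt (fun s : ℂ => (x : ℂ) + s * I) (1 * I) (s : ℂ) :=
    ((hasDerivAt_id (s : ℂ)).mul_const I).const_add _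
  have hcomp := (hu (x + s * I)).hasDerivAt.comp (s : ℂ) hline
  refine hcomp.comp_ofReal.norm_sq.congr_deriv ?_
  simp only [Function.comp_apply, one_mul, Complex.inner, mul_re, I_re, mul_zero, I_im, mul_one,
    zero_sub, conj_re, neg_mul, mul_im, add_zero, conj_im, mul_neg, sub_neg_eq_add, flux]
  ring

lemma eq_zero_of_forall_gt_horizontal (hu : Differentiable ℂ u) {x s : ℝ}
    (hzero : ∀ y : ℝ, x < y → u (y + s * I) = 0) : u = 0 := by
  have hline : Tendsto (fun y : ℝ => (y : ℂ) + s * I) (𝓝[≠] x) (𝓝[≠] (x + s * I)) :=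
    ((hasDerivAt_id (x : ℂ)).add_const (s * I)).comp_ofReal.tendsto_nhdsNE one_ne_zero
  have hright : ∀ᶠ y : ℝ in 𝓝[>] x, u (y + s * I) = 0 := eventually_nhdsWithin_of_forall hzero
  have hfreq : ∃ᶠ z in 𝓝[≠] ((x : ℂ) + s * I), u z = 0 :=
    (hline.mono_left (nhdsGT_le_nhdsNE x)).frequently hright.frequently
  exact AnalyticOnNhd.eq_of_frequently_eq (fun z _ => hu.analyticAt z)
    analyticOnNhd_const hfreq

lemma flux_neg (hu : IsAirySolution u) (hrec : IsRecessive u) (hne : u ≠ 0) (x : ℝ) {s : ℝ}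
    (hs : 0 < s) : flux u (x + s * I) < 0 := by
  let F : ℝ → ℝ := fun x => flux u (x + s * I)
  have hderiv (x : ℝ) : HasDerivAt F (s * ‖u (x + s * I)‖ ^ 2) x :=
    hasDerivAt_flux_horizontal hu x s
  have hmono : Monotone F := monotone_of_deriv_nonneg (fun x => (hderiv x).differentiableAt)
    fun x => by rw [(hderiv x).deriv]; positivity
  have hlim : Tendsto F atTop (𝓝 0) := by
    have hprod := ((continuous_conj.tendsto _).comp (hrec.tendsto s)).mul (hrec.tendsto_deriv s)
    rw [map_zero, zero_mul] at hprod
    exact (continuous_im.tendsto 0).comp hprod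
  have hle (y : ℝ) : F y ≤ 0 := hmono.ge_of_tendsto hlim y
  refine (hle x).lt_of_ne fun hx => hne ?_
  have hconst (y : ℝ) (hy : x ≤ y) : F y = 0 := (hle y).antisymm (hx.ge.trans (hmono hy))
  refine eq_zero_of_forall_gt_horizontal hu.differentiable (x := x) (s := s) fun y hy => ?_
  have hderiv_zero : HasDerivAt F 0 y := (hasDerivAt_const y (0 : ℝ)).congr_of_eventuallyEq <|
    (lt_mem_nhds hy).mono fun t ht => hconst t (le_of_lt ht)
  simpa [hs.ne'] using (hderiv y).unique hderiv_zero

lemma strictMonoOn_norm_sq_vertical (hu : IsAirySolution u) (hrec : IsRecessive u) (hne : u ≠ 0)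
    (x : ℝ) : StrictMonoOn (fun s : ℝ => ‖u (x + s * I)‖ ^ 2) (Ici 0) := by
  have hderiv := hasDerivAt_norm_sq_vertical hu.differentiable x
  refine strictMonoOn_of_deriv_pos (convex_Ici 0)
    (fun s _ => (hderiv s).continuousAt.continuousWithinAt) fun s hs => ?_
  rw [interior_Ici] at hs
  rw [(hderiv s).deriv]
  linarith [flux_neg hu hrec hne x hs]

lemma abs_im_eq_of_norm_eq (hu : IsAirySolution u) (hrec : IsRecessive u) (hne : u ≠ 0)
    (hconj : ∀ z, ‖u (conj z)‖ = ‖u z‖) {a b : ℂ} (hre : a.re = b.re) (hnorm : ‖u a‖ = ‖u b‖) :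
    |a.im| = |b.im| := by
  have hreflect (z : ℂ) : ‖u (z.re + (|z.im| : ℝ) * I)‖ = ‖u z‖ := by
    rcases abs_choice z.im with h | h <;> rw [h]
    · rw [re_add_im]
    · rw [← hconj z]
      congr 2
      apply Complex.ext <;> simp
  refine (strictMonoOn_norm_sq_vertical hu hrec hne a.re).injOn (abs_nonneg a.im)
    (abs_nonneg b.im) ?_
  rw [hreflect a, hre, hreflect b, hnorm]

end AirySolution

section Scorer

lemma tendsto_integral_pow_mul_cexp_comap_re_atBot {Ω : Type*} [MeasurableSpace Ω] {μ : Measure Ω}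
    {X : Ω → ℝ} (hX : AEMeasurable X μ) (hpos : ∀ᵐ ω ∂μ, 0 < X ω) (n : ℕ)
    (hint : Integrable (fun ω => X ω ^ n) μ) :
    Tendsto (fun z : ℂ => ∫ ω, (X ω : ℂ) ^ n * cexp (z * X ω) ∂μ) (comap re atBot) (𝓝 0) := by
  have hnorm (z : ℂ) (ω : Ω) :
      ‖(X ω : ℂ) ^ n * cexp (z * X ω)‖ = |X ω ^ n| * rexp (z.re * X ω) := by
    simp [Complex.norm_exp]
  rw [← integral_zero Ω ℂ]
  refine tendsto_integral_filter_of_dominated_convergence (fun ω => |X ω ^ n|)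
    (Eventually.of_forall fun z => by fun_prop) ?_ hint.abs ?_
  · filter_upwards [tendsto_comap.eventually_le_atBot 0] with z hz
    filter_upwards [hpos] with ω hω
    rw [hnorm]
    exact mul_le_of_le_one_right (abs_nonneg _)
      (Real.exp_le_one_iff.2 (mul_nonpos_of_nonpos_of_nonneg hz hω.le))
  · filter_upwards [hpos] with ω hω
    rw [tendsto_zero_iff_norm_tendsto_zero]
    simp only [hnorm]
    simpa using (Real.tendsto_exp_atBot.comp
      (tendsto_comap.atBot_mul_const hω)).const_mul |X ω ^ n|

/-- The measure `exp (-t ^ 3 / 3) dt` on the positive half line, whose moment-generating function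
is Scorer's function. -/
def cubicExpMeasure : Measure ℝ :=
  (volume.restrict (Ioi 0)).withDensity fun t => ENNReal.ofReal (rexp (-t ^ 3 / 3))

lemma integrable_cubicExpMeasure_iff {E : Type*} [NormedAddCommGroup E] [NormedSpace ℝ E]
    {f : ℝ → E} :
    Integrable f cubicExpMeasure ↔ IntegrableOn (fun t => rexp (-t ^ 3 / 3) • f t) (Ioi 0) := by
  rw [cubicExpMeasure, integrable_withDensity_iff_integrable_smul' (by fun_prop) (by simp)]
  simp only [ENNReal.toReal_ofReal (Real.exp_nonneg _), IntegrableOn]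

lemma integral_cubicExpMeasure {E : Type*} [NormedAddCommGroup E] [NormedSpace ℝ E]
    (f : ℝ → E) :
    ∫ t, f t ∂cubicExpMeasure = ∫ t in Ioi 0, rexp (-t ^ 3 / 3) • f t := by
  rw [cubicExpMeasure, integral_withDensity_eq_integral_toReal_smul (by fun_prop) (by simp)]
  simp only [ENNReal.toReal_ofReal (Real.exp_nonneg _)]

lemma ae_pos_cubicExpMeasure : ∀ᵐ t ∂cubicExpMeasure, 0 < t :=
  (withDensity_absolutelyContinuous _ _).ae_le (ae_restrict_mem measurableSet_Ioi)

lemma cubicExpMeasure_ne_zero : cubicExpMeasure ≠ 0 := by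
  rw [cubicExpMeasure, Ne, withDensity_eq_zero_iff (by fun_prop)]
  intro h
  have hfalse : ∀ᵐ _ : ℝ ∂volume.restrict (Ioi 0), False := h.mono fun _ ht => by
    simp [(Real.exp_pos _).not_ge] at ht
  rw [ae_iff] at hfalse
  simp at hfalse

lemma integrableExpSet_cubicExpMeasure : integrableExpSet id cubicExpMeasure = univ := by
  refine eq_univ_of_forall fun c => integrable_cubicExpMeasure_iff.2 ?_
  refine integrable_of_isBigO_exp_neg one_pos (by fun_prop) (.of_bound 1 ?_)
  filter_upwards [eventually_ge_atTop (|c| + 3)] with t ht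
  have hct : c ≤ t - 3 := by linarith [le_abs_self c]
  have ht3 : 3 ≤ t := by linarith [abs_nonneg c]
  simp only [id_eq, smul_eq_mul, ← Real.exp_add, Real.norm_eq_abs, Real.abs_exp, one_mul]
  gcongr
  nlinarith [mul_le_mul_of_nonneg_right hct (by linarith : 0 ≤ t),
    mul_le_mul_of_nonneg_right ht3 (sq_nonneg t)]

lemma mem_interior_integrableExpSet_cubicExpMeasure (c : ℝ) :
    c ∈ interior (integrableExpSet id cubicExpMeasure) := by
  simp [integrableExpSet_cubicExpMeasure]

/-- Scorer's function `Hi z = ∫₀^∞ exp (z * t - t ^ 3 / 3) dt`, without the customary factor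
`1 / π`. -/
def scorerHi : ℂ → ℂ := complexMGF id cubicExpMeasure

lemma integrable_pow_mul_cexp_cubicExpMeasure (n : ℕ) (z : ℂ) :
    Integrable (fun t : ℝ => (t : ℂ) ^ n * cexp (z * t)) cubicExpMeasure :=
  integrable_pow_mul_cexp_of_re_mem_interior_integrableExpSet
    (mem_interior_integrableExpSet_cubicExpMeasure z.re) n

lemma iteratedDeriv_scorerHi (n : ℕ) (z : ℂ) :
    iteratedDeriv n scorerHi z = ∫ t : ℝ, (t : ℂ) ^ n * cexp (z * t) ∂cubicExpMeasure :=
  iteratedDeriv_complexMGF (mem_interior_integrableExpSet_cubicExpMeasure z.re) n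

lemma differentiable_scorerHi : Differentiable ℂ scorerHi := fun z =>
  (analyticAt_complexMGF (mem_interior_integrableExpSet_cubicExpMeasure z.re)).differentiableAt

lemma tendsto_iteratedDeriv_scorerHi (n : ℕ) :
    Tendsto (iteratedDeriv n scorerHi) (comap re atBot) (𝓝 0) := by
  rw [funext (iteratedDeriv_scorerHi n)]
  exact tendsto_integral_pow_mul_cexp_comap_re_atBot aemeasurable_id ae_pos_cubicExpMeasure n
    (integrable_pow_of_mem_interior_integrableExpSet
      (mem_interior_integrableExpSet_cubicExpMeasure 0) n)

lemma scorerHi_conj (z : ℂ) : scorerHi (conj z) = conj (scorerHi z) := by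
  simp [scorerHi, complexMGF, ← integral_conj, ← Complex.exp_conj]

lemma scorerHi_zero_ne_zero : scorerHi 0 ≠ 0 := by
  rw [scorerHi, ← ofReal_zero, complexMGF_ofReal, Ne, ofReal_inj]
  exact (mgf_pos' cubicExpMeasure_ne_zero
    (integrable_of_mem_integrableExpSet
      (interior_subset (mem_interior_integrableExpSet_cubicExpMeasure 0)))).ne'

lemma integrable_sq_sub_mul_cexp_cubicExpMeasure (z : ℂ) :
    Integrable (fun t : ℝ => ((t : ℂ) ^ 2 - z) * cexp (z * t)) cubicExpMeasure := by
  refine ((integrable_pow_mul_cexp_cubicExpMeasure 2 z).sub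
    ((integrable_pow_mul_cexp_cubicExpMeasure 0 z).const_mul z)).congr (.of_forall fun t => ?_)
  simp only [Pi.sub_apply]
  ring

lemma integral_sq_sub_mul_cexp_cubicExpMeasure (z : ℂ) :
    ∫ t : ℝ, ((t : ℂ) ^ 2 - z) * cexp (z * t) ∂cubicExpMeasure = 1 := by
  let f : ℝ → ℂ := fun t => -(rexp (-t ^ 3 / 3) • cexp (z * t))
  let f' : ℝ → ℂ := fun t => rexp (-t ^ 3 / 3) • (((t : ℂ) ^ 2 - z) * cexp (z * t))
  have hderiv (t : ℝ) : HasDerivAt f (f' t) t := by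
    have hcube : HasDerivAt (fun t : ℝ => -t ^ 3 / 3) (-((3 : ℕ) * t ^ 2) / 3) t :=
      ((hasDerivAt_pow 3 t).neg).div_const 3
    have hlin : HasDerivAt (fun t : ℂ => z * t) (z * 1) (t : ℂ) :=
      (hasDerivAt_id _).const_mul z
    refine (hcube.exp.smul hlin.cexp.comp_ofReal).neg.congr_deriv ?_
    simp only [f', real_smul]
    push_cast
    ring
  have hf : IntegrableOn f (Ioi 0) := by
    refine (integrable_cubicExpMeasure_iff.1 ?_).neg
    simpa using integrable_pow_mul_cexp_cubicExpMeasure 0 z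
  have hf' : IntegrableOn f' (Ioi 0) :=
    integrable_cubicExpMeasure_iff.1 (integrable_sq_sub_mul_cexp_cubicExpMeasure z)
  have hlim : Tendsto f atTop (𝓝 0) :=
    tendsto_zero_of_hasDerivAt_of_integrableOn_Ioi (fun t _ => hderiv t) hf' hf
  rw [integral_cubicExpMeasure, integral_Ioi_of_hasDerivAt_of_tendsto' (fun t _ => hderiv t) hf'
    hlim]
  simp [f]

lemma deriv_deriv_scorerHi (z : ℂ) : deriv (deriv scorerHi) z = z * scorerHi z + 1 := by
  have h₀ := iteratedDeriv_scorerHi 0 z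
  have h₂ := iteratedDeriv_scorerHi 2 z
  rw [iteratedDeriv_zero] at h₀
  rw [iteratedDeriv_succ, iteratedDeriv_one] at h₂
  rw [h₂, h₀, ← integral_sq_sub_mul_cexp_cubicExpMeasure z, ← integral_const_mul, ← integral_add
    ((integrable_pow_mul_cexp_cubicExpMeasure 0 z).const_mul z)
    (integrable_sq_sub_mul_cexp_cubicExpMeasure z)]
  congr with t
  ring

end Scorer

section RecessiveAiry

/-- The solution `ω * Hi (ω * z)` of `u'' = z * u + 1` obtained by rotating Scorer's function
through a cube root of unity `ω`. -/
def rotatedScorer (ω : ℂ) : ℂ → ℂ := fun z => ω * scorerHi (ω * z)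

variable {ω : ℂ}

lemma differentiable_rotatedScorer (ω : ℂ) : Differentiable ℂ (rotatedScorer ω) :=
  (differentiable_scorerHi.comp (differentiable_id.const_mul ω)).const_mul ω

lemma deriv_rotatedScorer (ω : ℂ) :
    deriv (rotatedScorer ω) = fun z => ω ^ 2 * deriv scorerHi (ω * z) := by
  ext z
  unfold rotatedScorer
  simp only [deriv_const_mul_field, deriv_comp_mul_left, smul_eq_mul]
  ring

lemma deriv_deriv_rotatedScorer (hω : ω ^ 3 = 1) (z : ℂ) :
    deriv (deriv (rotatedScorer ω)) z = z * rotatedScorer ω z + 1 := by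
  rw [deriv_rotatedScorer]
  simp only [rotatedScorer, deriv_const_mul_field, deriv_comp_mul_left, smul_eq_mul,
    deriv_deriv_scorerHi]
  linear_combination (ω * z * scorerHi (ω * z) + 1) * hω

lemma isRecessive_rotatedScorer (hω : ω.re < 0) : IsRecessive (rotatedScorer ω) := by
  have hline (s : ℝ) :
      Tendsto (fun x : ℝ => ω * (x + s * I)) atTop (comap re atBot) := by
    rw [tendsto_comap_iff]
    have hre : re ∘ (fun x : ℝ => ω * (x + s * I)) = fun x => ω.re * x + -(ω.im * s) := by
      ext x
      simp [sub_eq_add_neg]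
    rw [hre]
    exact tendsto_atBot_add_const_right _ _ (tendsto_id.const_mul_atTop_of_neg hω)
  constructor <;> intro s
  · simpa [rotatedScorer] using
      ((tendsto_iteratedDeriv_scorerHi 0).comp (hline s)).const_mul ω
  · simpa [deriv_rotatedScorer] using
      ((tendsto_iteratedDeriv_scorerHi 1).comp (hline s)).const_mul (ω ^ 2)

lemma rotatedScorer_conj (ω z : ℂ) :
    rotatedScorer (conj ω) (conj z) = conj (rotatedScorer ω z) := by
  simp only [rotatedScorer, map_mul, ← scorerHi_conj]

/-- The primitive cube root of unity `exp (2 * π * I / 3)`. -/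
def cubeRootOfUnity : ℂ := ⟨-1 / 2, √3 / 2⟩

lemma cubeRootOfUnity_pow_three : cubeRootOfUnity ^ 3 = 1 := by
  have hsqrt : √3 ^ 2 = 3 := Real.sq_sqrt (by norm_num)
  apply Complex.ext <;> simp [cubeRootOfUnity, pow_succ] <;> grind

lemma cubeRootOfUnity_re_neg : cubeRootOfUnity.re < 0 := by norm_num [cubeRootOfUnity]

/-- A solution of the Airy equation recessive on the positive real axis, hence a multiple of
`Ai`. -/
def recessiveAiry (z : ℂ) : ℂ :=
  rotatedScorer cubeRootOfUnity z - rotatedScorer (conj cubeRootOfUnity) z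

lemma deriv_recessiveAiry : deriv recessiveAiry = fun z =>
    deriv (rotatedScorer cubeRootOfUnity) z - deriv (rotatedScorer (conj cubeRootOfUnity)) z :=
  funext fun z =>
    deriv_fun_sub (differentiable_rotatedScorer _ z) (differentiable_rotatedScorer _ z)

lemma isAirySolution_recessiveAiry : IsAirySolution recessiveAiry where
  differentiable := (differentiable_rotatedScorer _).sub (differentiable_rotatedScorer _)
  deriv_deriv z := by
    have hconj : conj cubeRootOfUnity ^ 3 = 1 := by
      rw [← map_pow, cubeRootOfUnity_pow_three, map_one]
    rw [deriv_recessiveAiry, deriv_fun_sub ((differentiable_rotatedScorer _).deriv z)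
      ((differentiable_rotatedScorer _).deriv z),
      deriv_deriv_rotatedScorer cubeRootOfUnity_pow_three, deriv_deriv_rotatedScorer hconj,
      recessiveAiry]
    ring

lemma isRecessive_recessiveAiry : IsRecessive recessiveAiry := by
  have h := isRecessive_rotatedScorer cubeRootOfUnity_re_neg
  have hconj : IsRecessive (rotatedScorer (conj cubeRootOfUnity)) :=
    isRecessive_rotatedScorer cubeRootOfUnity_re_neg
  constructor <;> intro s
  · simpa [recessiveAiry] using (h.tendsto s).sub (hconj.tendsto s)
  · simpa [deriv_recessiveAiry] using (h.tendsto_deriv s).sub (hconj.tendsto_deriv s)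

lemma recessiveAiry_conj (z : ℂ) : recessiveAiry (conj z) = -conj (recessiveAiry z) := by
  simp only [recessiveAiry, map_sub, ← rotatedScorer_conj, conj_conj, neg_sub]

lemma recessiveAiry_ne_zero : recessiveAiry ≠ 0 := fun h => by
  have h₀ : recessiveAiry 0 = (cubeRootOfUnity - conj cubeRootOfUnity) * scorerHi 0 := by
    simp [recessiveAiry, rotatedScorer, sub_mul]
  have him : (cubeRootOfUnity - conj cubeRootOfUnity).im ≠ 0 := by simp [cubeRootOfUnity]
  refine mul_ne_zero (fun hsub => him ?_) scorerHi_zero_ne_zero (h₀.symm.trans (congrFun h 0))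
  rw [hsub, zero_im]

lemma abs_im_eq_of_norm_recessiveAiry_eq {a b : ℂ} (hre : a.re = b.re)
    (hnorm : ‖recessiveAiry a‖ = ‖recessiveAiry b‖) : |a.im| = |b.im| :=
  abs_im_eq_of_norm_eq isAirySolution_recessiveAiry isRecessive_recessiveAiry recessiveAiry_ne_zero
    (fun z => by rw [recessiveAiry_conj, norm_neg, RCLike.norm_conj]) hre hnorm

end RecessiveAiry

lemma hasDerivAt_airyW {A B : ℂ → ℂ} (hA : Differentiable ℂ A) (hB : Differentiable ℂ B) (ε : ℝ)
    (lam : ℂ) {a b : ℂ} (ha : a = (ε ^ ((1 : ℝ) / 3) : ℝ) * (lam + I))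
    (hb : b = (ε ^ ((1 : ℝ) / 3) : ℝ) * (lam - I)) :
    HasDerivAt (airyW A B ε) ((ε ^ ((1 : ℝ) / 3) : ℝ) *
      (deriv A a * B b + A a * deriv B b - (deriv A b * B a + A b * deriv B a))) lam := by
  subst ha hb
  have hplus := ((hasDerivAt_id lam).add_const I).const_mul ((ε ^ ((1 : ℝ) / 3) : ℝ) : ℂ)
  have hminus := ((hasDerivAt_id lam).sub_const I).const_mul ((ε ^ ((1 : ℝ) / 3) : ℝ) : ℂ)
  refine ((((hA _).hasDerivAt.comp lam hplus).mul ((hB _).hasDerivAt.comp lam hminus)).sub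
    (((hA _).hasDerivAt.comp lam hminus).mul ((hB _).hasDerivAt.comp lam hplus))).congr_deriv ?_
  simp only [Function.comp_apply, id_eq]
  ring

lemma wronskian_airyAi_airyBi_ne_zero {Ai Bi : ℂ → ℂ} (hAi : IsAiryAi Ai) (hBi : IsAiryBi Bi) :
    wronskian Ai Bi 0 ≠ 0 := by
  obtain ⟨-, -, -, hAi₀, hAi₀'⟩ := hAi
  obtain ⟨-, -, -, hBi₀, hBi₀'⟩ := hBi
  rw [wronskian, hAi₀, hAi₀', hBi₀, hBi₀']
  norm_cast
  rw [neg_div, neg_mul, sub_neg_eq_add]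
  positivity

theorem nonreal_eigenvalues_simple_general {A B : ℂ → ℂ} (hA : IsAirySolution A)
    (hB : IsAirySolution B) (hAB : wronskian A B 0 ≠ 0) {ε : ℝ} (hε : 0 < ε) {lam : ℂ}
    (him : lam.im ≠ 0) (hlam : airyW A B ε lam = 0) : deriv (airyW A B ε) lam ≠ 0 := by
  intro hderiv
  set c : ℝ := ε ^ ((1 : ℝ) / 3)
  have hc_pos : 0 < c := Real.rpow_pos_of_pos hε _
  let a : ℂ := c * (lam + I)
  let b : ℂ := c * (lam - I)
  rw [(hasDerivAt_airyW hA.differentiable hB.differentiable ε lam (a := a) (b := b) rfl rfl).deriv,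
    mul_eq_zero_iff_left (ofReal_ne_zero.2 hc_pos.ne')] at hderiv
  have hsq : recessiveAiry a ^ 2 = recessiveAiry b ^ 2 :=
    sq_eq_sq_of_cross_eq_zero hA hB hAB isAirySolution_recessiveAiry hlam hderiv
  have hnorm : ‖recessiveAiry a‖ = ‖recessiveAiry b‖ := by
    rw [← sq_eq_sq₀ (norm_nonneg _) (norm_nonneg _), ← norm_pow, hsq, norm_pow]
  have habs : |c * (lam.im + 1)| = |c * (lam.im - 1)| := by
    simpa [a, b] using abs_im_eq_of_norm_recessiveAiry_eq (a := a) (b := b) (by simp [a, b]) hnorm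
  rw [abs_mul, abs_mul, mul_right_inj' (abs_pos.2 hc_pos.ne').ne', abs_eq_abs] at habs
  rcases habs with h | h
  · linarith
  · exact him (by linarith)

/-- Every non-real eigenvalue of the model operator `T(ε)` is a simple zero of the
characteristic function: collisions of eigenvalues are impossible outside the real axis. -/
theorem nonreal_eigenvalues_simple (Ai Bi : ℂ → ℂ)
    (hAi : IsAiryAi Ai) (hBi : IsAiryBi Bi)
    (ε : ℝ) (hε : 0 < ε) (lam : ℂ) (him : lam.im ≠ 0)
    (hlam : airyW Ai Bi ε lam = 0) :
    deriv (airyW Ai Bi ε) lam ≠ 0 := by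
  exact nonreal_eigenvalues_simple_general hAi.isAirySolution hBi.isAirySolution
    (wronskian_airyAi_airyBi_ne_zero hAi hBi) hε him hlam
end
end
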